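/- arXiv:1102.4478 — 4 statements merged into one kernel-verified Lean document; each statement's English description precedes it below -/
import Mathlib

section
/- Let γ₁, γ₂ : ℝ → ℝ² be C^∞ curves, each with a 3/2-cusp at t = 0. Then γ₁ and γ₂ have the same affine cuspidal curvature μ_A at t = 0 if and only if there exist an equi-affine transformation T of ℝ² and a C^∞ change of parameter u = u(t) near t = 0 with u(0) = 0 and du/dt > 0 such that T(γ₂(u(t))) − γ₁(t) has order higher than t⁵ at t = 0 (i.e. (T(γ₂(u(t))) − γ₁(t))/t⁵ → 0 as t → 0). -/
noncomputable section
open Real Set Filter Topology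

/-- The determinant `[a, b] = a₁b₂ − a₂b₁` of two vectors in the plane. -/
def det2 (a b : ℝ × ℝ) : ℝ := a.1 * b.2 - a.2 * b.1

/-- The Euclidean norm on `ℝ × ℝ`. -/
def enorm2 (a : ℝ × ℝ) : ℝ := Real.sqrt (a.1 ^ 2 + a.2 ^ 2)

/-- The Euclidean arclength parameter of `γ` based at `0`. -/
def sG (γ : ℝ → ℝ × ℝ) (t : ℝ) : ℝ := ∫ u in (0:ℝ)..t, enorm2 (deriv γ u)

/-- The affine arclength parameter of `γ` based at `0`. -/
def sA (γ : ℝ → ℝ × ℝ) (t : ℝ) : ℝ :=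
  ∫ u in (0:ℝ)..t, |det2 (deriv γ u) (iteratedDeriv 2 γ u)| ^ ((1:ℝ)/3)

/-- The Euclidean curvature `κ_g = [γ', γ'']/‖γ'‖³`. -/
def kappaG (γ : ℝ → ℝ × ℝ) (t : ℝ) : ℝ :=
  det2 (deriv γ t) (iteratedDeriv 2 γ t) / enorm2 (deriv γ t) ^ 3

/-- The affine curvature `κ_A`. -/
def kappaA (γ : ℝ → ℝ × ℝ) (t : ℝ) : ℝ :=
  (3 * det2 (deriv γ t) (iteratedDeriv 2 γ t) * det2 (deriv γ t) (iteratedDeriv 4 γ t)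
    + 12 * det2 (deriv γ t) (iteratedDeriv 2 γ t)
        * det2 (iteratedDeriv 2 γ t) (iteratedDeriv 3 γ t)
    - 5 * det2 (deriv γ t) (iteratedDeriv 3 γ t) ^ 2)
  / (9 * |det2 (deriv γ t) (iteratedDeriv 2 γ t)| ^ ((8:ℝ)/3))

/-- `γ` has a 3/2-cusp at `t = 0`. -/
def HasCusp (γ : ℝ → ℝ × ℝ) : Prop :=
  deriv γ 0 = 0 ∧ det2 (iteratedDeriv 2 γ 0) (iteratedDeriv 3 γ 0) ≠ 0

/-- The Euclidean cuspidal curvature at a 3/2-cusp `t = 0`. -/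
def muG (γ : ℝ → ℝ × ℝ) : ℝ :=
  det2 (iteratedDeriv 2 γ 0) (iteratedDeriv 3 γ 0) / enorm2 (iteratedDeriv 2 γ 0) ^ ((5:ℝ)/2)

/-- The affine cuspidal curvature at a 3/2-cusp `t = 0`. -/
def muA (γ : ℝ → ℝ × ℝ) : ℝ :=
  (24 * det2 (iteratedDeriv 2 γ 0) (iteratedDeriv 3 γ 0)
      * det2 (iteratedDeriv 2 γ 0) (iteratedDeriv 5 γ 0)
   + 60 * det2 (iteratedDeriv 2 γ 0) (iteratedDeriv 3 γ 0)
      * det2 (iteratedDeriv 3 γ 0) (iteratedDeriv 4 γ 0)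
   - 35 * det2 (iteratedDeriv 2 γ 0) (iteratedDeriv 4 γ 0) ^ 2)
  / |det2 (iteratedDeriv 2 γ 0) (iteratedDeriv 3 γ 0)| ^ ((12:ℝ)/5)

/-- `γ` (regular at `0`) has a generic inflection point at `t = 0`. -/
def HasGenericInflection (γ : ℝ → ℝ × ℝ) : Prop :=
  deriv γ 0 ≠ 0 ∧ det2 (deriv γ 0) (iteratedDeriv 2 γ 0) = 0 ∧
    det2 (deriv γ 0) (iteratedDeriv 3 γ 0) ≠ 0

/-- The affine inflectional curvature at a generic inflection point `t = 0`. -/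
def muI (γ : ℝ → ℝ × ℝ) : ℝ :=
  Real.sign (det2 (deriv γ 0) (iteratedDeriv 3 γ 0)) *
    (det2 (deriv γ 0) (iteratedDeriv 4 γ 0)
      - 6 * det2 (iteratedDeriv 2 γ 0) (iteratedDeriv 3 γ 0))
  / |det2 (deriv γ 0) (iteratedDeriv 3 γ 0)| ^ ((5:ℝ)/4)

/-- The affine map `x ↦ Ax + v` on the plane, with `A = (a b; c d)`. -/
def applyAff (a b c d : ℝ) (v : ℝ × ℝ) (p : ℝ × ℝ) : ℝ × ℝ :=
  (a * p.1 + b * p.2 + v.1, c * p.1 + d * p.2 + v.2)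

/-!
Agreement to order higher than `t⁵` means equality of the derivatives of order at most `5` at `0`.
The invariant `muA` only sees these derivatives and is unchanged by equi-affine maps; under a
change of parameter `u` with `k = u'(0)` it is unchanged too, because at a critical point of `γ` the
determinant `[γ'', γ''']` is multiplied by `k ^ 5` and the numerator of `muA` by `k ^ 12`.

Conversely, write `γ⁽⁴⁾ = x γ'' + y γ'''` and `γ⁽⁵⁾ = z γ'' + w γ'''` at the cusp, so that
`muA γ = (24 w - 60 x - 35 y ^ 2) / |[γ'', γ''']| ^ (2/5)`. Fix `k = u'(0) > 0` by comparing the two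
determinants. Then `u''(0)`, `u'''(0)` and `u⁽⁴⁾(0)` adjust `y`, `x` and `z` to the values of the
other curve, and `w` follows from the equality of the invariants. The linear map matching `γ''` and
`γ'''` now matches all derivatives up to order `5`, and its determinant is `±1` by the choice of
`k`.
-/

open Asymptotics
open scoped ContDiff Nat

section Taylor

variable {E : Type*} [NormedAddCommGroup E] [NormedSpace ℝ E] {f g : ℝ → E} {x₀ : ℝ} {n : ℕ}

lemma taylor_isLittleO_of_contDiffAt (hf : ContDiffAt ℝ n f x₀) :
    (fun x => f x - ∑ k ∈ Finset.range (n + 1), ((k ! : ℝ)⁻¹ * (x - x₀) ^ k) • iteratedDeriv k f x₀)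
      =o[𝓝 x₀] fun x => (x - x₀) ^ n := by
  obtain ⟨s, hs, hfs⟩ := hf.contDiffOn le_rfl (by simp)
  obtain ⟨ε, hε, hball⟩ := Metric.mem_nhds_iff.1 hs
  have hx₀ : x₀ ∈ Metric.ball x₀ ε := Metric.mem_ball_self hε
  have htaylor := taylor_isLittleO (convex_ball x₀ ε) hx₀ (hfs.mono hball)
  simpa only [taylor_within_apply, iteratedDerivWithin_of_isOpen Metric.isOpen_ball hx₀,
    Metric.isOpen_ball.nhdsWithin_eq hx₀] using htaylor

lemma isBigO_sub_pow_sub_pow_of_le {m : ℕ} (h : m ≤ n) :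
    (fun x : ℝ => (x - x₀) ^ n) =O[𝓝 x₀] fun x => (x - x₀) ^ m := by
  have hbounded : (fun x : ℝ => (x - x₀) ^ (n - m)) =O[𝓝 x₀] fun _ => (1 : ℝ) :=
    (by fun_prop : ContinuousAt (fun x : ℝ => (x - x₀) ^ (n - m)) x₀).isBigO_one ℝ
  simpa only [← pow_add, Nat.add_sub_cancel' h, mul_one] using
    (isBigO_refl (fun x : ℝ => (x - x₀) ^ m) (𝓝 x₀)).mul hbounded

lemma eq_zero_of_smul_const_isLittleO {α : Type*} {l : Filter α} [l.NeBot] {r : α → ℝ} {v : E}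
    (hr : ∀ᶠ x in l, r x ≠ 0) (h : (fun x => r x • v) =o[l] r) : v = 0 := by
  have hinv : (fun x => (r x)⁻¹ • r x • v) =o[l] fun x => (r x)⁻¹ • r x :=
    (isBigO_refl _ l).smul_isLittleO h
  have hconst : (fun _ => v) =o[l] fun _ => (1 : ℝ) := by
    refine hinv.congr' ?_ ?_
    · filter_upwards [hr] with x hx using inv_smul_smul₀ hx v
    · filter_upwards [hr] with x hx using inv_mul_cancel₀ hx
  exact isLittleO_const_const_iff.1 hconst

lemma isLittleO_sub_pow_iff_iteratedDeriv_eq_zero (hf : ContDiffAt ℝ n f x₀) :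
    f =o[𝓝[≠] x₀] (fun x => (x - x₀) ^ n) ↔ ∀ j ≤ n, iteratedDeriv j f x₀ = 0 := by
  refine ⟨fun hfo j => ?_, fun hzero => ?_⟩
  · induction j using Nat.strong_induction_on with
    | _ j ih =>
      intro hj
      have htaylor := (taylor_isLittleO_of_contDiffAt (hf.of_le (mod_cast hj))).mono
        (nhdsWithin_le_nhds (s := {x₀}ᶜ))
      have hsum (x : ℝ) : ∑ k ∈ Finset.range (j + 1),
          ((k ! : ℝ)⁻¹ * (x - x₀) ^ k) • iteratedDeriv k f x₀
            = (x - x₀) ^ j • (j ! : ℝ)⁻¹ • iteratedDeriv j f x₀ := by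
        rw [Finset.sum_range_succ, Finset.sum_eq_zero, zero_add, mul_comm, mul_smul]
        intro k hk
        have hkj := Finset.mem_range.1 hk
        rw [ih k hkj (by lia), smul_zero]
      have hlead : (fun x => (x - x₀) ^ j • (j ! : ℝ)⁻¹ • iteratedDeriv j f x₀) =o[𝓝[≠] x₀]
          fun x => (x - x₀) ^ j :=
        ((hfo.trans_isBigO ((isBigO_sub_pow_sub_pow_of_le hj).mono nhdsWithin_le_nhds)).sub
          htaylor).congr_left fun x => by rw [hsum, sub_sub_cancel]
      have hne : ∀ᶠ x in 𝓝[≠] x₀, (x - x₀) ^ j ≠ 0 := by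
        filter_upwards [self_mem_nhdsWithin] with x hx using pow_ne_zero j (sub_ne_zero.2 hx)
      have hzero := eq_zero_of_smul_const_isLittleO hne hlead
      exact (smul_eq_zero.1 hzero).resolve_left (by positivity)
  · have htaylor := taylor_isLittleO_of_contDiffAt hf
    refine (htaylor.mono nhdsWithin_le_nhds).congr_left fun x => ?_
    rw [Finset.sum_eq_zero, sub_zero]
    intro k hk
    rw [hzero k (Finset.mem_range_succ_iff.1 hk), smul_zero]

lemma tendsto_inv_pow_smul_sub_iff_iteratedDeriv_eq (hf : ContDiffAt ℝ n f x₀)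
    (hg : ContDiffAt ℝ n g x₀) :
    Tendsto (fun x => ((x - x₀) ^ n)⁻¹ • (f x - g x)) (𝓝[≠] x₀) (𝓝 0) ↔
      ∀ j ≤ n, iteratedDeriv j f x₀ = iteratedDeriv j g x₀ := by
  have hlittleO : Tendsto (fun x => ((x - x₀) ^ n)⁻¹ • (f x - g x)) (𝓝[≠] x₀) (𝓝 0) ↔
      (fun x => f x - g x) =o[𝓝[≠] x₀] fun x => (x - x₀) ^ n := by
    rw [← isLittleO_norm_norm, isLittleO_iff_tendsto', tendsto_zero_iff_norm_tendsto_zero]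
    · simp only [norm_smul, norm_inv, div_eq_inv_mul]
    · filter_upwards [self_mem_nhdsWithin] with x hx hpow
      exact absurd (norm_eq_zero.1 hpow) (pow_ne_zero n (sub_ne_zero.2 hx))
  rw [hlittleO, isLittleO_sub_pow_iff_iteratedDeriv_eq_zero (hf.sub hg)]
  refine forall₂_congr fun j hj => ?_
  have hj' : (j : WithTop ℕ∞) ≤ n := mod_cast hj
  rw [iteratedDeriv_fun_sub (hf.of_le hj') (hg.of_le hj'), sub_eq_zero]

lemma exists_contDiff_iteratedDeriv_eq (a : Fin n → E) :
    ∃ u : ℝ → E, ContDiff ℝ ω u ∧ ∀ i : Fin n, iteratedDeriv i u 0 = a i := by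
  refine ⟨fun t => ∑ j : Fin n, t ^ (j : ℕ) • ((j : ℕ) ! : ℝ)⁻¹ • a j, by fun_prop, fun i => ?_⟩
  have hmonomial (j : Fin n) :
      iteratedDeriv i (fun t : ℝ => t ^ (j : ℕ) • ((j : ℕ) ! : ℝ)⁻¹ • a j) 0
        = if i = j then a i else 0 := by
    have h := iteratedDeriv_smul_const (n := i) (x := (0 : ℝ)) (f := fun t : ℝ => t ^ (j : ℕ))
      (by fun_prop) (((j : ℕ) ! : ℝ)⁻¹ • a j)
    rw [iteratedDeriv_fun_pow_zero] at h
    refine h.trans ?_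
    split_ifs with hval hij hij
    · rw [hij]
      exact smul_inv_smul₀ (by positivity) _
    · exact absurd (Fin.ext hval) hij
    · exact absurd (congrArg Fin.val hij) hval
    · simp
  rw [iteratedDeriv_fun_sum fun j _ => by fun_prop]
  simp only [hmonomial, Finset.sum_ite_eq, Finset.mem_univ, if_true]

end Taylor

section Composition

variable {𝕜 E F : Type*} [NontriviallyNormedField 𝕜] [NormedAddCommGroup E] [NormedSpace 𝕜 E]
  [NormedAddCommGroup F] [NormedSpace 𝕜 F] {f : 𝕜 → E} {u : 𝕜 → 𝕜} {x : 𝕜} {n : ℕ}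

lemma iteratedDeriv_clm_comp (L : E →L[𝕜] F) (hf : ContDiffAt 𝕜 n f x) :
    iteratedDeriv n (L ∘ f) x = L (iteratedDeriv n f x) := by
  simp only [iteratedDeriv, L.iteratedFDeriv_comp_left hf le_rfl,
    ContinuousLinearMap.compContinuousMultilinearMap_coe, Function.comp_apply]

lemma iteratedDeriv_succ_scomp (hf : ContDiffAt 𝕜 (n + 1) f (u x))
    (hu : ContDiffAt 𝕜 (n + 1) u x) :
    iteratedDeriv (n + 1) (f ∘ u) x = ∑ i ∈ Finset.range (n + 1),
      n.choose i • iteratedDeriv (i + 1) u x • iteratedDeriv (n - i) (deriv f ∘ u) x := by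
  have hchain : deriv (f ∘ u) =ᶠ[𝓝 x] deriv u • (deriv f ∘ u) := by
    filter_upwards [hu.continuousAt.eventually (hf.eventually (by simp)),
      hu.eventually (by simp)] with y hfy huy
    exact deriv.scomp y (hfy.differentiableAt (by simp)) (huy.differentiableAt (by simp))
  have hleibniz := iteratedDerivWithin_smul (mem_univ x) uniqueDiffOn_univ
    (hu.derivWithin le_rfl).contDiffWithinAt
    ((hf.derivWithin le_rfl).comp x (hu.of_le le_self_add)).contDiffWithinAt
  simp only [iteratedDerivWithin_univ] at hleibniz
  simp only [iteratedDeriv_succ', hchain.iteratedDeriv_eq n, hleibniz]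

lemma iteratedDeriv_scomp_four (hf : ContDiffAt 𝕜 4 f (u x)) (hu : ContDiffAt 𝕜 4 u x) :
    iteratedDeriv 4 (f ∘ u) x =
      deriv u x ^ 4 • iteratedDeriv 4 f (u x)
      + (6 * deriv u x ^ 2 * iteratedDeriv 2 u x) • iteratedDeriv 3 f (u x)
      + (4 * deriv u x * iteratedDeriv 3 u x + 3 * iteratedDeriv 2 u x ^ 2)
        • iteratedDeriv 2 f (u x)
      + iteratedDeriv 4 u x • deriv f (u x) := by
  have hf' : ContDiffAt 𝕜 3 (deriv f) (u x) := hf.derivWithin (by norm_num)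
  have hu' : ContDiffAt 𝕜 3 u x := hu.of_le (by norm_num)
  have htwo : deriv (deriv f) = iteratedDeriv 2 f := by rw [iteratedDeriv_succ', iteratedDeriv_one]
  have hone : deriv (deriv f ∘ u) x = deriv u x • deriv (deriv f) (u x) :=
    deriv.scomp x (hf'.differentiableAt (by norm_num)) (hu'.differentiableAt (by norm_num))
  rw [iteratedDeriv_succ_scomp (n := 3) (by exact_mod_cast hf) (by exact_mod_cast hu)]
  simp only [Finset.sum_range_succ, Finset.sum_range_zero, Nat.choose_zero_right,
    Nat.choose_one_right, Nat.choose_succ_self_right, Nat.choose_self,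
    zero_add, one_smul, Nat.reduceAdd, Nat.reduceSub, iteratedDeriv_zero, iteratedDeriv_one,
    iteratedDeriv_scomp_three hf' hu',
    iteratedDeriv_scomp_two (hf'.of_le (by norm_num)) (hu'.of_le (by norm_num)),
    hone, htwo, ← iteratedDeriv_succ', Function.comp_apply]
  module

lemma iteratedDeriv_scomp_five (hf : ContDiffAt 𝕜 5 f (u x)) (hu : ContDiffAt 𝕜 5 u x) :
    iteratedDeriv 5 (f ∘ u) x =
      deriv u x ^ 5 • iteratedDeriv 5 f (u x)
      + (10 * deriv u x ^ 3 * iteratedDeriv 2 u x) • iteratedDeriv 4 f (u x)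
      + (10 * deriv u x ^ 2 * iteratedDeriv 3 u x + 15 * deriv u x * iteratedDeriv 2 u x ^ 2)
        • iteratedDeriv 3 f (u x)
      + (5 * deriv u x * iteratedDeriv 4 u x + 10 * iteratedDeriv 2 u x * iteratedDeriv 3 u x)
        • iteratedDeriv 2 f (u x)
      + iteratedDeriv 5 u x • deriv f (u x) := by
  have hf' : ContDiffAt 𝕜 4 (deriv f) (u x) := hf.derivWithin (by norm_num)
  have hu' : ContDiffAt 𝕜 4 u x := hu.of_le (by norm_num)
  have htwo : deriv (deriv f) = iteratedDeriv 2 f := by rw [iteratedDeriv_succ', iteratedDeriv_one]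
  have hone : deriv (deriv f ∘ u) x = deriv u x • deriv (deriv f) (u x) :=
    deriv.scomp x (hf'.differentiableAt (by norm_num)) (hu'.differentiableAt (by norm_num))
  rw [iteratedDeriv_succ_scomp (n := 4) (by exact_mod_cast hf) (by exact_mod_cast hu)]
  simp only [Finset.sum_range_succ, Finset.sum_range_zero, Nat.choose_zero_right,
    Nat.choose_one_right, Nat.choose_succ_self_right, Nat.choose_self,
    (by decide : Nat.choose 4 2 = 6),
    zero_add, one_smul, Nat.reduceAdd, Nat.reduceSub, iteratedDeriv_zero, iteratedDeriv_one,
    iteratedDeriv_scomp_four hf' hu',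
    iteratedDeriv_scomp_three (hf'.of_le (by norm_num)) (hu'.of_le (by norm_num)),
    iteratedDeriv_scomp_two (hf'.of_le (by norm_num)) (hu'.of_le (by norm_num)),
    hone, htwo, ← iteratedDeriv_succ', Function.comp_apply]
  module

end Composition

section CriticalPoint

variable {E : Type*} [NormedAddCommGroup E] [NormedSpace ℝ E] {u : ℝ → ℝ} {x y : ℝ}

lemma iteratedDeriv_comp_of_deriv_eq_zero {f : ℝ → E} (hy : u x = y)
    (hf : ContDiffAt ℝ 5 f y) (hcrit : deriv f y = 0) (hu : ContDiffAt ℝ 5 u x) :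
    iteratedDeriv 2 (f ∘ u) x = deriv u x ^ 2 • iteratedDeriv 2 f y ∧
    iteratedDeriv 3 (f ∘ u) x = deriv u x ^ 3 • iteratedDeriv 3 f y
      + (3 * deriv u x * iteratedDeriv 2 u x) • iteratedDeriv 2 f y ∧
    iteratedDeriv 4 (f ∘ u) x = deriv u x ^ 4 • iteratedDeriv 4 f y
      + (6 * deriv u x ^ 2 * iteratedDeriv 2 u x) • iteratedDeriv 3 f y
      + (4 * deriv u x * iteratedDeriv 3 u x + 3 * iteratedDeriv 2 u x ^ 2)
        • iteratedDeriv 2 f y ∧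
    iteratedDeriv 5 (f ∘ u) x = deriv u x ^ 5 • iteratedDeriv 5 f y
      + (10 * deriv u x ^ 3 * iteratedDeriv 2 u x) • iteratedDeriv 4 f y
      + (10 * deriv u x ^ 2 * iteratedDeriv 3 u x + 15 * deriv u x * iteratedDeriv 2 u x ^ 2)
        • iteratedDeriv 3 f y
      + (5 * deriv u x * iteratedDeriv 4 u x + 10 * iteratedDeriv 2 u x * iteratedDeriv 3 u x)
        • iteratedDeriv 2 f y := by
  subst hy
  rw [iteratedDeriv_scomp_two (hf.of_le (by norm_num)) (hu.of_le (by norm_num)),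
    iteratedDeriv_scomp_three (hf.of_le (by norm_num)) (hu.of_le (by norm_num)),
    iteratedDeriv_scomp_four (hf.of_le (by norm_num)) (hu.of_le (by norm_num)),
    iteratedDeriv_scomp_five hf hu, hcrit]
  refine ⟨?_, ?_, ?_, ?_⟩ <;> module

lemma det2_iteratedDeriv_comp_of_deriv_eq_zero {γ : ℝ → ℝ × ℝ} (hy : u x = y)
    (hγ : ContDiffAt ℝ 3 γ y) (hcrit : deriv γ y = 0) (hu : ContDiffAt ℝ 3 u x) :
    det2 (iteratedDeriv 2 (γ ∘ u) x) (iteratedDeriv 3 (γ ∘ u) x) =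
      deriv u x ^ 5 * det2 (iteratedDeriv 2 γ y) (iteratedDeriv 3 γ y) := by
  subst hy
  simp only [iteratedDeriv_scomp_two (hγ.of_le (by norm_num)) (hu.of_le (by norm_num)),
    iteratedDeriv_scomp_three hγ hu, hcrit, smul_zero, add_zero, det2, Prod.fst_add,
    Prod.snd_add, Prod.smul_fst, Prod.smul_snd, smul_eq_mul]
  ring

end CriticalPoint

section PlaneAffineMaps

variable {a b c d : ℝ} {v p q : ℝ × ℝ}

/-- The linear part `A = (a b; c d)` of the affine map `applyAff a b c d v`. -/
def linearPart (a b c d : ℝ) : ℝ × ℝ →L[ℝ] ℝ × ℝ :=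
  (a • ContinuousLinearMap.fst ℝ ℝ ℝ + b • ContinuousLinearMap.snd ℝ ℝ ℝ).prod
    (c • ContinuousLinearMap.fst ℝ ℝ ℝ + d • ContinuousLinearMap.snd ℝ ℝ ℝ)

lemma linearPart_apply : linearPart a b c d p = (a * p.1 + b * p.2, c * p.1 + d * p.2) := rfl

lemma applyAff_eq_add_linearPart : applyAff a b c d v p = v + linearPart a b c d p :=
  Prod.ext (add_comm _ _) (add_comm _ _)

lemma det2_linearPart :
    det2 (linearPart a b c d p) (linearPart a b c d q) = (a * d - b * c) * det2 p q := by
  simp only [linearPart_apply, det2]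
  ring

lemma exists_linearPart_eq (hpq : det2 p q ≠ 0) (p' q' : ℝ × ℝ) :
    ∃ a b c d, linearPart a b c d p = p' ∧ linearPart a b c d q = q' := by
  refine ⟨(p'.1 * q.2 - q'.1 * p.2) / det2 p q, (q'.1 * p.1 - p'.1 * q.1) / det2 p q,
    (p'.2 * q.2 - q'.2 * p.2) / det2 p q, (q'.2 * p.1 - p'.2 * q.1) / det2 p q, ?_, ?_⟩ <;>
  · ext <;> simp only [linearPart_apply] <;> field_simp <;> simp only [det2] <;> ring

lemma exists_eq_smul_add_smul (hpq : det2 p q ≠ 0) (r : ℝ × ℝ) :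
    ∃ x y : ℝ, r = x • p + y • q := by
  refine ⟨det2 r q / det2 p q, det2 p r / det2 p q, ?_⟩
  ext <;> simp only [Prod.fst_add, Prod.snd_add, Prod.smul_fst, Prod.smul_snd, smul_eq_mul] <;>
    field_simp <;> simp only [det2] <;> ring

lemma contDiff_applyAff {n : WithTop ℕ∞} : ContDiff ℝ n (applyAff a b c d v) := by
  unfold applyAff
  fun_prop

lemma iteratedDeriv_applyAff_comp {γ : ℝ → ℝ × ℝ} {t : ℝ} {n : ℕ} (hγ : ContDiffAt ℝ n γ t)
    (hn : 0 < n) :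
    iteratedDeriv n (applyAff a b c d v ∘ γ) t = linearPart a b c d (iteratedDeriv n γ t) := by
  have hcomp : applyAff a b c d v ∘ γ = fun s => v + (linearPart a b c d ∘ γ) s :=
    funext fun _ => applyAff_eq_add_linearPart
  rw [hcomp, iteratedDeriv_const_add hn, iteratedDeriv_clm_comp _ hγ]

end PlaneAffineMaps

section Invariance

variable {γ γ₁ γ₂ : ℝ → ℝ × ℝ} {u : ℝ → ℝ}

lemma pow_mul_rpow_div {r s : ℝ} (hr : 0 ≤ r) (hs : 0 ≤ s) (m : ℕ) {n : ℕ} (hn : n ≠ 0) :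
    (r ^ n * s) ^ ((m : ℝ) / n) = r ^ m * s ^ ((m : ℝ) / n) := by
  rw [Real.mul_rpow (by positivity) hs, ← Real.rpow_natCast r n, ← Real.rpow_mul hr,
    mul_div_cancel₀ _ (by exact_mod_cast hn), Real.rpow_natCast]

lemma muA_congr (h : ∀ j ≤ 5, iteratedDeriv j γ₁ 0 = iteratedDeriv j γ₂ 0) :
    muA γ₁ = muA γ₂ := by
  simp only [muA, h 2 (by norm_num), h 3 (by norm_num), h 4 (by norm_num), h 5 le_rfl]

lemma muA_applyAff_comp {a b c d : ℝ} {v : ℝ × ℝ} (hγ : ContDiffAt ℝ 5 γ 0)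
    (hdet : |a * d - b * c| = 1) : muA (applyAff a b c d v ∘ γ) = muA γ := by
  have hsq : (a * d - b * c) ^ 2 = 1 := by rw [← sq_abs, hdet, one_pow]
  have hderiv (j : ℕ) (hj : 0 < j) (hj5 : (j : WithTop ℕ∞) ≤ 5) :=
    iteratedDeriv_applyAff_comp (a := a) (b := b) (c := c) (d := d) (v := v) (hγ.of_le hj5) hj
  simp only [muA, hderiv 2 (by norm_num) (by norm_num), hderiv 3 (by norm_num) (by norm_num),
    hderiv 4 (by norm_num) (by norm_num), hderiv 5 (by norm_num) (by norm_num), det2_linearPart,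
    abs_mul, hdet, one_mul]
  congr 1
  linear_combination (24 * det2 (iteratedDeriv 2 γ 0) (iteratedDeriv 3 γ 0)
      * det2 (iteratedDeriv 2 γ 0) (iteratedDeriv 5 γ 0)
    + 60 * det2 (iteratedDeriv 2 γ 0) (iteratedDeriv 3 γ 0)
      * det2 (iteratedDeriv 3 γ 0) (iteratedDeriv 4 γ 0)
    - 35 * det2 (iteratedDeriv 2 γ 0) (iteratedDeriv 4 γ 0) ^ 2) * hsq

lemma muA_comp (hγ : ContDiffAt ℝ 5 γ 0) (hcrit : deriv γ 0 = 0) (hu : ContDiffAt ℝ 5 u 0)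
    (hu0 : u 0 = 0) (hu' : deriv u 0 ≠ 0) : muA (γ ∘ u) = muA γ := by
  obtain ⟨htwo, hthree, hfour, hfive⟩ := iteratedDeriv_comp_of_deriv_eq_zero hu0 hγ hcrit hu
  have hden : |det2 (iteratedDeriv 2 (γ ∘ u) 0) (iteratedDeriv 3 (γ ∘ u) 0)| ^ ((12 : ℝ) / 5) =
      deriv u 0 ^ 12 * |det2 (iteratedDeriv 2 γ 0) (iteratedDeriv 3 γ 0)| ^ ((12 : ℝ) / 5) := by
    rw [det2_iteratedDeriv_comp_of_deriv_eq_zero hu0 (hγ.of_le (by norm_num)) hcrit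
      (hu.of_le (by norm_num)), abs_mul, abs_pow, ← Even.pow_abs (by decide : Even 12) (deriv u 0)]
    exact_mod_cast pow_mul_rpow_div (abs_nonneg _) (abs_nonneg _) 12 (n := 5) (by norm_num)
  rw [muA, hden, muA, ← mul_div_mul_left _ (_ ^ _) (pow_ne_zero 12 hu')]
  congr 1
  simp only [htwo, hthree, hfour, hfive, det2, Prod.fst_add, Prod.snd_add, Prod.smul_fst,
    Prod.smul_snd, smul_eq_mul]
  ring

end Invariance

/-- `iteratedDeriv 4 γ 0` and `iteratedDeriv 5 γ 0` have coordinates `(x, y)` and `(z, w)` with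
respect to `iteratedDeriv 2 γ 0`, `iteratedDeriv 3 γ 0`. For a planar curve with a 3/2-cusp these
two vectors form a basis, and the coordinates determine the 5-jet of the curve up to an affine
map. -/
structure HasCuspCoords {E : Type*} [NormedAddCommGroup E] [NormedSpace ℝ E] (γ : ℝ → E)
    (x y z w : ℝ) : Prop where
  four : iteratedDeriv 4 γ 0 = x • iteratedDeriv 2 γ 0 + y • iteratedDeriv 3 γ 0
  five : iteratedDeriv 5 γ 0 = z • iteratedDeriv 2 γ 0 + w • iteratedDeriv 3 γ 0

section CuspCoords

variable {E : Type*} [NormedAddCommGroup E] [NormedSpace ℝ E] {f : ℝ → E}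
  {γ γ₁ γ₂ : ℝ → ℝ × ℝ} {x y z w x' y' z' w' k : ℝ}

lemma HasCusp.exists_hasCuspCoords (hγ : HasCusp γ) : ∃ x y z w, HasCuspCoords γ x y z w := by
  obtain ⟨x, y, hfour⟩ := exists_eq_smul_add_smul hγ.2 (iteratedDeriv 4 γ 0)
  obtain ⟨z, w, hfive⟩ := exists_eq_smul_add_smul hγ.2 (iteratedDeriv 5 γ 0)
  exact ⟨x, y, z, w, hfour, hfive⟩

lemma HasCusp.comp {u : ℝ → ℝ} (hγ : HasCusp γ) (hsmooth : ContDiffAt ℝ 3 γ 0)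
    (hu : ContDiffAt ℝ 3 u 0) (hu0 : u 0 = 0) (hu' : deriv u 0 ≠ 0) : HasCusp (γ ∘ u) := by
  constructor
  · rw [deriv.scomp_of_eq 0 (hsmooth.differentiableAt (by norm_num))
      (hu.differentiableAt (by norm_num)) hu0.symm, hu0, hγ.1, smul_zero]
  · rw [det2_iteratedDeriv_comp_of_deriv_eq_zero hu0 hsmooth hγ.1 hu]
    exact mul_ne_zero (pow_ne_zero 5 hu') hγ.2

lemma HasCuspCoords.muA_eq (h : HasCuspCoords γ x y z w) (hγ : HasCusp γ) :
    muA γ = (24 * w - 60 * x - 35 * y ^ 2)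
      / |det2 (iteratedDeriv 2 γ 0) (iteratedDeriv 3 γ 0)| ^ ((2 : ℝ) / 5) := by
  have hpos := abs_pos.2 hγ.2
  have hden : |det2 (iteratedDeriv 2 γ 0) (iteratedDeriv 3 γ 0)| ^ ((12 : ℝ) / 5) =
      det2 (iteratedDeriv 2 γ 0) (iteratedDeriv 3 γ 0) ^ 2
        * |det2 (iteratedDeriv 2 γ 0) (iteratedDeriv 3 γ 0)| ^ ((2 : ℝ) / 5) := by
    rw [← sq_abs, ← Real.rpow_natCast, ← Real.rpow_add hpos]
    norm_num
  rw [muA, hden, ← mul_div_mul_left _ (_ ^ _) (pow_ne_zero 2 hγ.2)]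
  congr 1
  simp only [h.four, h.five, det2, Prod.fst_add, Prod.snd_add, Prod.smul_fst, Prod.smul_snd,
    smul_eq_mul]
  ring

lemma HasCuspCoords.invariant_eq_of_muA_eq (h₁ : HasCuspCoords γ₁ x y z w)
    (h₂ : HasCuspCoords γ₂ x' y' z' w') (hγ₁ : HasCusp γ₁) (hγ₂ : HasCusp γ₂) (hk : 0 ≤ k)
    (hdet : |det2 (iteratedDeriv 2 γ₁ 0) (iteratedDeriv 3 γ₁ 0)| =
      k ^ 5 * |det2 (iteratedDeriv 2 γ₂ 0) (iteratedDeriv 3 γ₂ 0)|)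
    (hμ : muA γ₁ = muA γ₂) :
    24 * w - 60 * x - 35 * y ^ 2 = k ^ 2 * (24 * w' - 60 * x' - 35 * y' ^ 2) := by
  have hden : |det2 (iteratedDeriv 2 γ₁ 0) (iteratedDeriv 3 γ₁ 0)| ^ ((2 : ℝ) / 5) =
      k ^ 2 * |det2 (iteratedDeriv 2 γ₂ 0) (iteratedDeriv 3 γ₂ 0)| ^ ((2 : ℝ) / 5) := by
    rw [hdet]
    exact_mod_cast pow_mul_rpow_div hk (abs_nonneg _) 2 (n := 5) (by norm_num)
  have hpos₁ := Real.rpow_pos_of_pos (abs_pos.2 hγ₁.2) ((2 : ℝ) / 5)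
  have hpos₂ := Real.rpow_pos_of_pos (abs_pos.2 hγ₂.2) ((2 : ℝ) / 5)
  rw [h₁.muA_eq hγ₁, h₂.muA_eq hγ₂, div_eq_div_iff hpos₁.ne' hpos₂.ne', hden] at hμ
  refine mul_right_cancel₀ hpos₂.ne' ?_
  linear_combination hμ

lemma HasCuspCoords.exists_comp (h : HasCuspCoords f x y z w) (hf : ContDiffAt ℝ 5 f 0)
    (hcrit : deriv f 0 = 0) (hk : k ≠ 0)
    (hinv : 24 * w' - 60 * x' - 35 * y' ^ 2 = k ^ 2 * (24 * w - 60 * x - 35 * y ^ 2)) :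
    ∃ u : ℝ → ℝ, ContDiff ℝ ω u ∧ u 0 = 0 ∧ deriv u 0 = k ∧ HasCuspCoords (f ∘ u) x' y' z' w' := by
  -- `α`, `β`, `δ` are the derivatives of `u` of order 2, 3, 4; they adjust `y`, `x`, `z` in turn.
  obtain ⟨α, hα⟩ : ∃ α, y' * k = k ^ 2 * y + 6 * α := ⟨(y' * k - k ^ 2 * y) / 6, by ring⟩
  obtain ⟨β, hβ⟩ : ∃ β, x' * k ^ 2 + 3 * y' * k * α = k ^ 4 * x + 4 * k * β + 3 * α ^ 2 :=
    ⟨(x' * k ^ 2 + 3 * y' * k * α - k ^ 4 * x - 3 * α ^ 2) / (4 * k), by field_simp; ring⟩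
  obtain ⟨δ, hδ⟩ : ∃ δ, z' * k ^ 2 + 3 * w' * k * α =
      k ^ 5 * z + 10 * k ^ 3 * α * x + 5 * k * δ + 10 * α * β :=
    ⟨(z' * k ^ 2 + 3 * w' * k * α - k ^ 5 * z - 10 * k ^ 3 * α * x - 10 * α * β) / (5 * k),
      by field_simp; ring⟩
  have hw : w' * k ^ 3 = k ^ 5 * w + 10 * k ^ 3 * α * y + 10 * k ^ 2 * β + 15 * k * α ^ 2 := by
    linear_combination (k ^ 3 * hinv + 60 * k * hβ
      + (35 * k * (y' * k + k ^ 2 * y + 6 * α) - 180 * k * α) * hα) / 24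
  obtain ⟨u, hu, hderiv⟩ := exists_contDiff_iteratedDeriv_eq ![0, k, α, β, δ]
  have hu0 : u 0 = 0 := hderiv 0
  have hu1 : deriv u 0 = k := iteratedDeriv_one (f := u) ▸ hderiv 1
  have hu2 : iteratedDeriv 2 u 0 = α := hderiv 2
  have hu3 : iteratedDeriv 3 u 0 = β := hderiv 3
  have hu4 : iteratedDeriv 4 u 0 = δ := hderiv 4
  obtain ⟨htwo, hthree, hfour, hfive⟩ :=
    iteratedDeriv_comp_of_deriv_eq_zero hu0 hf hcrit (hu.of_le le_top).contDiffAt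
  rw [hu1] at htwo
  rw [hu1, hu2] at hthree
  rw [hu1, hu2, hu3, h.four] at hfour
  rw [hu1, hu2, hu3, hu4, h.four, h.five] at hfive
  refine ⟨u, hu, hu0, hu1, ?_, ?_⟩
  · rw [hfour, htwo, hthree]
    linear_combination (norm := module)
      -(k ^ 2 * hα) • iteratedDeriv 3 f 0 - hβ • iteratedDeriv 2 f 0
  · rw [hfive, htwo, hthree]
    linear_combination (norm := module) -hw • iteratedDeriv 3 f 0 - hδ • iteratedDeriv 2 f 0

lemma HasCuspCoords.exists_applyAff_comp_iteratedDeriv_eq (h₁ : HasCuspCoords γ₁ x y z w)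
    (h₂ : HasCuspCoords γ₂ x y z w) (hsmooth : ContDiffAt ℝ 5 γ₂ 0) (hcrit₁ : deriv γ₁ 0 = 0)
    (hγ₂ : HasCusp γ₂)
    (hdet : |det2 (iteratedDeriv 2 γ₁ 0) (iteratedDeriv 3 γ₁ 0)| =
      |det2 (iteratedDeriv 2 γ₂ 0) (iteratedDeriv 3 γ₂ 0)|) :
    ∃ a b c d v, |a * d - b * c| = 1 ∧
      ∀ j ≤ 5, iteratedDeriv j (applyAff a b c d v ∘ γ₂) 0 = iteratedDeriv j γ₁ 0 := by
  obtain ⟨a, b, c, d, htwo, hthree⟩ :=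
    exists_linearPart_eq hγ₂.2 (iteratedDeriv 2 γ₁ 0) (iteratedDeriv 3 γ₁ 0)
  refine ⟨a, b, c, d, γ₁ 0 - linearPart a b c d (γ₂ 0), ?_, fun j hj => ?_⟩
  · rw [← htwo, ← hthree, det2_linearPart, abs_mul] at hdet
    exact (mul_eq_right₀ (abs_ne_zero.2 hγ₂.2)).1 hdet
  · rcases j.eq_zero_or_pos with rfl | hj0
    · simp only [iteratedDeriv_zero, Function.comp_apply, applyAff_eq_add_linearPart,
        sub_add_cancel]
    · rw [iteratedDeriv_applyAff_comp (hsmooth.of_le (by exact_mod_cast hj)) hj0]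
      interval_cases j
      · rw [iteratedDeriv_one, iteratedDeriv_one, hcrit₁, hγ₂.1, map_zero]
      · exact htwo
      · exact hthree
      · rw [h₁.four, h₂.four, map_add, map_smul, map_smul, htwo, hthree]
      · rw [h₁.five, h₂.five, map_add, map_smul, map_smul, htwo, hthree]

end CuspCoords

lemma HasCusp.exists_applyAff_comp_iteratedDeriv_eq {γ₁ γ₂ : ℝ → ℝ × ℝ} (hγ₁ : HasCusp γ₁)
    (hγ₂ : HasCusp γ₂) (hsmooth : ContDiffAt ℝ 5 γ₂ 0) (hμ : muA γ₁ = muA γ₂) :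
    ∃ (a b c d : ℝ) (v : ℝ × ℝ) (u : ℝ → ℝ), |a * d - b * c| = 1 ∧ ContDiff ℝ ω u ∧ u 0 = 0 ∧
      0 < deriv u 0 ∧
      ∀ j ≤ 5, iteratedDeriv j (applyAff a b c d v ∘ γ₂ ∘ u) 0 = iteratedDeriv j γ₁ 0 := by
  obtain ⟨x, y, z, w, h₁⟩ := hγ₁.exists_hasCuspCoords
  obtain ⟨x', y', z', w', h₂⟩ := hγ₂.exists_hasCuspCoords
  have hpos₁ := abs_pos.2 hγ₁.2
  have hpos₂ := abs_pos.2 hγ₂.2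
  obtain ⟨k, hk, hdet⟩ : ∃ k > 0, |det2 (iteratedDeriv 2 γ₁ 0) (iteratedDeriv 3 γ₁ 0)| =
      k ^ 5 * |det2 (iteratedDeriv 2 γ₂ 0) (iteratedDeriv 3 γ₂ 0)| := by
    have hratio := div_pos hpos₁ hpos₂
    refine ⟨_, Real.rpow_pos_of_pos hratio ((5 : ℕ) : ℝ)⁻¹, ?_⟩
    rw [Real.rpow_inv_natCast_pow hratio.le (by norm_num), div_mul_cancel₀ _ hpos₂.ne']
  obtain ⟨u, hu, hu0, hu1, hcoords⟩ := h₂.exists_comp hsmooth hγ₂.1 hk.ne'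
    (z' := z) (h₁.invariant_eq_of_muA_eq h₂ hγ₁ hγ₂ hk.le hdet hμ)
  have hu5 : ContDiffAt ℝ 5 u 0 := (hu.of_le le_top).contDiffAt
  have hu3 : ContDiffAt ℝ 3 u 0 := (hu.of_le le_top).contDiffAt
  have hsmooth3 : ContDiffAt ℝ 3 γ₂ 0 := hsmooth.of_le (by norm_num)
  have hdet' := det2_iteratedDeriv_comp_of_deriv_eq_zero hu0 hsmooth3 hγ₂.1 hu3
  obtain ⟨a, b, c, d, v, hA, hderiv⟩ := h₁.exists_applyAff_comp_iteratedDeriv_eq hcoords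
    (ContDiffAt.comp 0 (hu0.symm ▸ hsmooth) hu5) hγ₁.1 (hγ₂.comp hsmooth3 hu3 hu0 (hu1 ▸ hk.ne'))
    (by rw [hdet, hdet', hu1, abs_mul, abs_of_pos (pow_pos hk 5)])
  exact ⟨a, b, c, d, v, u, hA, hu, hu0, hu1 ▸ hk, hderiv⟩

theorem stmt_4_general {n : WithTop ℕ∞} (hn : 5 ≤ n) {γ₁ γ₂ : ℝ → ℝ × ℝ}
    (hγ₁ : ContDiffAt ℝ 5 γ₁ 0) (hγ₂ : ContDiffAt ℝ 5 γ₂ 0)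
    (hc₁ : HasCusp γ₁) (hc₂ : HasCusp γ₂) :
    muA γ₁ = muA γ₂ ↔
      ∃ (a b c d : ℝ) (v : ℝ × ℝ), |a * d - b * c| = 1 ∧
        ∃ ε > (0 : ℝ), ∃ u : ℝ → ℝ,
          ContDiffOn ℝ n u (Ioo (-ε) ε) ∧ u 0 = 0 ∧ 0 < deriv u 0 ∧
          Tendsto (fun t => (t ^ 5)⁻¹ • (applyAff a b c d v (γ₂ (u t)) - γ₁ t))
            (𝓝[≠] (0 : ℝ)) (𝓝 (0 : ℝ × ℝ)) := by
  have hjet {a b c d : ℝ} {v : ℝ × ℝ} {u : ℝ → ℝ} (hu : ContDiffAt ℝ 5 u 0) (hu0 : u 0 = 0) :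
      Tendsto (fun t => (t ^ 5)⁻¹ • (applyAff a b c d v (γ₂ (u t)) - γ₁ t)) (𝓝[≠] 0) (𝓝 0) ↔
        ∀ j ≤ 5, iteratedDeriv j (applyAff a b c d v ∘ γ₂ ∘ u) 0 = iteratedDeriv j γ₁ 0 := by
    have hcomp : ContDiffAt ℝ 5 (applyAff a b c d v ∘ γ₂ ∘ u) 0 :=
      contDiff_applyAff.contDiffAt.comp 0 (ContDiffAt.comp 0 (hu0.symm ▸ hγ₂) hu)
    simpa only [sub_zero, Function.comp_apply, Nat.cast_ofNat] using
      tendsto_inv_pow_smul_sub_iff_iteratedDeriv_eq hcomp hγ₁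
  constructor
  · intro hμ
    obtain ⟨a, b, c, d, v, u, hA, hu, hu0, hu1, heq⟩ :=
      hc₁.exists_applyAff_comp_iteratedDeriv_eq hc₂ hγ₂ hμ
    exact ⟨a, b, c, d, v, hA, 1, one_pos, u, (hu.of_le le_top).contDiffOn, hu0, hu1,
      (hjet (hu.of_le le_top).contDiffAt hu0).2 heq⟩
  · rintro ⟨a, b, c, d, v, hA, ε, hε, u, hu, hu0, hu1, htendsto⟩
    have hu5 : ContDiffAt ℝ 5 u 0 :=
      (hu.contDiffAt (Ioo_mem_nhds (neg_lt_zero.2 hε) hε)).of_le hn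
    rw [← muA_congr ((hjet hu5 hu0).1 htendsto),
      muA_applyAff_comp (ContDiffAt.comp 0 (hu0.symm ▸ hγ₂) hu5) hA,
      muA_comp hγ₂ hc₂.1 hu5 hu0 hu1.ne']

/-- Two 3/2-cusps have the same affine cuspidal curvature iff they agree, up to an
equi-affine transformation and an orientation preserving change of parameter,
to order higher than `t⁵`. -/
theorem stmt_4 (γ₁ γ₂ : ℝ → ℝ × ℝ)
    (hγ₁ : ContDiff ℝ (⊤:ℕ∞) γ₁) (hγ₂ : ContDiff ℝ (⊤:ℕ∞) γ₂)
    (hc₁ : HasCusp γ₁) (hc₂ : HasCusp γ₂) :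
    muA γ₁ = muA γ₂ ↔
      ∃ (a b c d : ℝ) (v : ℝ × ℝ), |a * d - b * c| = 1 ∧
        ∃ ε > (0:ℝ), ∃ u : ℝ → ℝ,
          ContDiffOn ℝ (⊤:ℕ∞) u (Set.Ioo (-ε) ε) ∧ u 0 = 0 ∧ 0 < deriv u 0 ∧
          Tendsto (fun t => (t ^ 5)⁻¹ • (applyAff a b c d v (γ₂ (u t)) - γ₁ t))
            (𝓝[≠] (0:ℝ)) (𝓝 (0 : ℝ × ℝ)) := by
  have h5 : (5 : WithTop ℕ∞) ≤ (⊤ : ℕ∞) := WithTop.coe_le_coe.2 le_top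
  exact stmt_4_general h5 (hγ₁.contDiffAt.of_le h5) (hγ₂.contDiffAt.of_le h5) hc₁ hc₂
end
end

section
/- Let γ : ℝ → ℝ² be a C^∞ curve with a 3/2-cusp at t = 0, with [γ'(t), γ''(t)] ≠ 0 for t ≠ 0 near 0, and let τ(t) := sgn(t)·|s_A(t)|^{3/5}. Then lim_{t→0} (s_A(t)²·κ_A(t) − 4/25)/τ(t)² = (1/220)·(20/3)^{1/5}·μ_A, where μ_A is the affine cuspidal curvature of γ at t = 0. -/
noncomputable section
open Real Set Filter Topology

/-!
At a 3/2-cusp `[γ', γ''] = t² g` with `g(0) ≠ 0`, hence `s_A = t |t|^(2/3) k` with `k(0) ≠ 0`, and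
the numerator of `9 κ_A` is `t² n`. In `s_A² κ_A = k² n |g|^(-8/3) / 9` all powers of `t` cancel,
so only the second-order expansions of `g`, `k` and `n` at `0` matter. Taylor's formula provides
them, and they combine to `4/25 + (3/1100) |D|^(2/5) μ_A t² + o(t²)` with `D = [γ''(0), γ'''(0)]`,
while `τ² = t² |k|^(6/5)`.
-/

open Asymptotics intervalIntegral MeasureTheory

section TwoJet

variable {E : Type*} [NormedAddCommGroup E] [NormedSpace ℝ E]

lemma tendsto_quadratic (a b c : E) :
    Tendsto (fun t : ℝ => a + t • b + t ^ 2 • c) (𝓝[≠] 0) (𝓝 a) :=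
  tendsto_nhdsWithin_of_tendsto_nhds (Continuous.tendsto' (by fun_prop) _ _ (by simp))

/-- The second-order asymptotic expansion `f t = a + t b + t² c + o(t²)` as `t → 0`. The value of
`f` at `0` itself is ignored, so that `f` may be a quotient by a power of `t`. -/
def HasTwoJet (f : ℝ → E) (a b c : E) : Prop :=
  (fun t => f t - (a + t • b + t ^ 2 • c)) =o[𝓝[≠] 0] fun t => t ^ 2

namespace HasTwoJet

variable {f g : ℝ → E} {a b c a' b' c' : E}

lemma congr_isLittleO (hg : HasTwoJet g a b c)
    (hfg : (fun t => f t - g t) =o[𝓝[≠] 0] fun t => t ^ 2) : HasTwoJet f a b c :=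
  (hfg.add hg).congr_left fun t => by abel

lemma congr (hf : HasTwoJet f a b c) (hfg : ∀ t ≠ 0, f t = g t) : HasTwoJet g a b c :=
  IsLittleO.congr' hf (eventually_mem_nhdsWithin.mono fun t ht => by simp only [hfg t ht]) .rfl

lemma of_pow_remainder (m : ℕ)
    (hf : (fun t => f t - (t ^ m • a + t ^ (m + 1) • b + t ^ (m + 2) • c))
      =o[𝓝[≠] 0] fun t => t ^ (m + 2)) :
    HasTwoJet (fun t => (t ^ m)⁻¹ • f t) a b c := by
  refine ((isBigO_refl (fun t : ℝ => (t ^ m)⁻¹) (𝓝[≠] 0)).smul_isLittleO hf).congr' ?_ ?_ <;>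
    filter_upwards [self_mem_nhdsWithin] with t (ht : t ≠ 0)
  · simp only [smul_sub, smul_add, smul_smul, pow_add]
    field_simp
    simp
  · rw [smul_eq_mul, pow_add, inv_mul_cancel_left₀ (pow_ne_zero m ht)]

lemma const (a : E) : HasTwoJet (fun _ => a) a 0 0 :=
  (isLittleO_zero _ _).congr_left fun t => by simp

lemma add (hf : HasTwoJet f a b c) (hg : HasTwoJet g a' b' c') :
    HasTwoJet (fun t => f t + g t) (a + a') (b + b') (c + c') :=
  (IsLittleO.add hf hg).congr_left fun t => by module

lemma const_smul (k : ℝ) (hf : HasTwoJet f a b c) :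
    HasTwoJet (fun t => k • f t) (k • a) (k • b) (k • c) :=
  (IsLittleO.const_smul_left hf k).congr_left fun t => by
    simp only [Pi.smul_apply, smul_sub, smul_add, smul_comm k]

lemma smul_const {f : ℝ → ℝ} {a b c : ℝ} (hf : HasTwoJet f a b c) (v : E) :
    HasTwoJet (fun t => f t • v) (a • v) (b • v) (c • v) := by
  have hv := hf.smul_isBigO (isBigO_const_one ℝ v _)
  refine hv.congr (fun t => ?_) (by simp)
  simp only [smul_eq_mul]
  module

lemma sub (hf : HasTwoJet f a b c) (hg : HasTwoJet g a' b' c') :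
    HasTwoJet (fun t => f t - g t) (a - a') (b - b') (c - c') :=
  (IsLittleO.sub hf hg).congr_left fun t => by module

lemma tendsto (hf : HasTwoJet f a b c) : Tendsto f (𝓝[≠] 0) (𝓝 a) := by
  have hrem := hf.tendsto_zero_of_tendsto (tendsto_nhdsWithin_of_tendsto_nhds
    ((continuous_pow (M := ℝ) 2).tendsto' 0 0 (by norm_num)))
  simpa using hrem.add (tendsto_quadratic a b c)

lemma isBigO_id (hf : HasTwoJet f 0 b c) : f =O[𝓝[≠] 0] fun t => t := by
  have hid : (fun t : ℝ => t ^ 2) =O[𝓝[≠] 0] fun t => t :=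
    ((isLittleO_pow_id one_lt_two).mono nhdsWithin_le_nhds).isBigO
  have hpoly : (fun t : ℝ => 0 + t • b + t ^ 2 • c) =O[𝓝[≠] 0] fun t => t :=
    ((isBigO_refl (fun t : ℝ => t) _).smul ((tendsto_quadratic b c 0).isBigO_one ℝ)).congr
      (fun t => by module) (fun t => by simp)
  simpa using (hf.isBigO.trans hid).add hpoly

lemma tendsto_inv_sq_smul (hf : HasTwoJet f 0 0 c) :
    Tendsto (fun t => (t ^ 2)⁻¹ • f t) (𝓝[≠] 0) (𝓝 c) := by
  have hrem := hf.tendsto_inv_smul_nhds_zero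
  refine tendsto_sub_nhds_zero_iff.1 (hrem.congr' ?_)
  filter_upwards [self_mem_nhdsWithin] with t (ht : t ≠ 0)
  simp [smul_sub, ht]

lemma fst {F G : Type*} [NormedAddCommGroup F] [NormedSpace ℝ F] [NormedAddCommGroup G]
    [NormedSpace ℝ G] {f : ℝ → F × G} {a b c : F × G} (hf : HasTwoJet f a b c) :
    HasTwoJet (fun t => (f t).1) a.1 b.1 c.1 :=
  isBigO_fst_prod.trans_isLittleO hf

lemma snd {F G : Type*} [NormedAddCommGroup F] [NormedSpace ℝ F] [NormedAddCommGroup G]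
    [NormedSpace ℝ G] {f : ℝ → F × G} {a b c : F × G} (hf : HasTwoJet f a b c) :
    HasTwoJet (fun t => (f t).2) a.2 b.2 c.2 :=
  isBigO_snd_prod.trans_isLittleO hf

lemma mul {A : Type*} [NormedRing A] [NormedAlgebra ℝ A] {f g : ℝ → A} {a b c a' b' c' : A}
    (hf : HasTwoJet f a b c) (hg : HasTwoJet g a' b' c') :
    HasTwoJet (fun t => f t * g t) (a * a') (a * b' + b * a') (a * c' + b * b' + c * a') := by
  have hleft := hf.mul_isBigO (hg.tendsto.isBigO_one ℝ)
  have hright := ((tendsto_quadratic a b c).isBigO_one ℝ).mul_isLittleO hg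
  have hcubic : (fun t : ℝ => t ^ 3 • (b * c' + c * b' + t • (c * c'))) =o[𝓝[≠] 0]
      fun t => t ^ 2 := by
    have hpow : (fun t : ℝ => t ^ 3) =o[𝓝[≠] 0] fun t => t ^ 2 :=
      (isLittleO_pow_pow (by norm_num)).mono nhdsWithin_le_nhds
    simpa using hpow.smul_isBigO ((tendsto_quadratic (b * c' + c * b') (c * c') 0).isBigO_one ℝ)
  refine (((hleft.congr_right (by simp)).add (hright.congr_right (by simp))).add hcubic).congr_left
    fun t => ?_
  simp only [mul_add, add_mul, sub_mul, mul_sub, smul_mul_assoc, mul_smul_comm]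
  module

lemma comp {φ : ℝ → E} {φ₁ φ₂ : E} {f : ℝ → ℝ} {a b c : ℝ}
    (hφ : HasTwoJet (fun x => φ (a + x)) (φ a) φ₁ φ₂) (hf : HasTwoJet f a b c) :
    HasTwoJet (fun t => φ (f t)) (φ a) (b • φ₁) (c • φ₁ + b ^ 2 • φ₂) := by
  have hy : HasTwoJet (fun t => f t - a) 0 b c := by simpa using hf.sub (const a)
  have hquad : HasTwoJet (fun t => φ a + (f t - a) • φ₁ + (f t - a) ^ 2 • φ₂)
      (φ a) (b • φ₁) (c • φ₁ + b ^ 2 • φ₂) := by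
    have hsq : HasTwoJet (fun t => (f t - a) ^ 2) 0 0 (b ^ 2) := by
      simpa [sq] using hy.mul hy
    simpa using ((const (φ a)).add (hy.smul_const φ₁)).add (hsq.smul_const φ₂)
  have hφ' : (fun x => φ (a + x) - (φ a + x • φ₁ + x ^ 2 • φ₂)) =o[𝓝 0] fun x => x ^ 2 := by
    simpa [insert_eq, union_compl_self] using (isLittleO_insert (by simp)).2 hφ
  refine hquad.congr_isLittleO ?_
  simpa [Function.comp_def] using
    (hφ'.comp_tendsto hy.tendsto).trans_isBigO (hy.isBigO_id.pow 2)

end HasTwoJet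

lemma taylor_isLittleO_iteratedDeriv {f : ℝ → E} (k m : ℕ) (hf : ContDiff ℝ (k + m : ℕ) f)
    (x₀ : ℝ) :
    (fun x => iteratedDeriv k f x - ∑ j ∈ Finset.range (m + 1),
      ((j.factorial : ℝ)⁻¹ * (x - x₀) ^ j) • iteratedDeriv (k + j) f x₀) =o[𝓝 x₀]
        fun x => (x - x₀) ^ m := by
  have hk : ContDiff ℝ m (iteratedDeriv k f) := by
    rw [iteratedDeriv_eq_iterate]
    exact ContDiff.iterate_deriv' m k (by rwa [add_comm])
  refine (taylor_isLittleO_univ hk).congr_left fun x => ?_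
  simp only [taylor_within_apply, iteratedDerivWithin_univ, iteratedDeriv_eq_iterate,
    ← Function.iterate_add_apply, add_comm]

end TwoJet

section RealPower

lemma hasTwoJet_one_add_rpow (p : ℝ) :
    HasTwoJet (fun x : ℝ => (1 + x) ^ p) 1 p (p * (p - 1) / 2) := by
  have hO := (Real.one_add_rpow_hasFPowerSeriesAt_zero (a := p)).isBigO_sub_partialSum_pow 3
  have hcubic : (fun x : ℝ => ‖x‖ ^ 3) =o[𝓝 0] fun x => x ^ 2 := by
    simpa using (isLittleO_norm_pow_norm_pow (E' := ℝ) (show 2 < 3 by norm_num))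
  refine ((hO.trans_isLittleO hcubic).mono nhdsWithin_le_nhds).congr_left fun x => ?_
  have hchoose : Ring.choose p 2 = p * (p - 1) / 2 := by
    rw [Ring.choose_eq_smul]
    simp only [descPochhammer_succ_right, descPochhammer_zero, Polynomial.smeval_mul,
      Polynomial.smeval_sub, Polynomial.smeval_X, Polynomial.smeval_one, Nat.factorial_two,
      Nat.cast_zero, Nat.cast_one, sub_zero, one_mul, pow_zero, pow_one, one_smul, smul_eq_mul]
    ring
  simp [FormalMultilinearSeries.partialSum, Finset.sum_range_succ, binomialSeries,
    FormalMultilinearSeries.coeff_ofScalars, hchoose]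

lemma HasTwoJet.abs_rpow {f : ℝ → ℝ} {a b c : ℝ} (hf : HasTwoJet f a b c) (ha : a ≠ 0) (p : ℝ) :
    HasTwoJet (fun t => |f t| ^ p) (|a| ^ p) (|a| ^ p * (p * (b / a)))
      (|a| ^ p * (p * (c / a) + p * (p - 1) / 2 * (b / a) ^ 2)) := by
  have hratio : HasTwoJet (fun t => f t / a) 1 (b / a) (c / a) := by
    simpa [div_eq_inv_mul, ha] using hf.const_smul a⁻¹
  have hpow : HasTwoJet (fun x : ℝ => (1 + x) ^ p) (1 ^ p) p (p * (p - 1) / 2) := by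
    simpa using hasTwoJet_one_add_rpow p
  have hrpow := (hpow.comp (φ := fun x : ℝ => x ^ p) hratio).const_smul (|a| ^ p)
  refine IsLittleO.congr' hrpow ?_ .rfl
  filter_upwards [hratio.tendsto.eventually_const_lt one_pos] with t ht
  have habs : |f t| = |a| * (f t / a) := by
    rw [← abs_of_pos ht, abs_div, mul_div_cancel₀ _ (abs_ne_zero.2 ha)]
  simp only [habs, Real.mul_rpow (abs_nonneg a) ht.le, one_rpow, smul_eq_mul]
  ring

end RealPower

section WeightedIntegral

variable {E : Type*} [NormedAddCommGroup E] [NormedSpace ℝ E]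

lemma isLittleO_integral_of_isLittleO_abs_rpow {r : ℝ → E} {q : ℝ} (hq : 0 ≤ q)
    (hr : r =o[𝓝[≠] 0] fun u => |u| ^ q) :
    (fun t => ∫ u in (0 : ℝ)..t, r u) =o[𝓝[≠] 0] fun t => t * |t| ^ q := by
  refine isLittleO_iff.2 fun ε hε => ?_
  obtain ⟨δ, hδ, hbound⟩ := Metric.mem_nhdsWithin_iff.1 (isLittleO_iff.1 hr hε)
  filter_upwards [inter_mem_nhdsWithin _ (Metric.ball_mem_nhds 0 hδ)] with t ⟨_, htδ⟩
  have hrt : ∀ u ∈ uIoc 0 t, u ≠ 0 → ‖r u‖ ≤ ε * |t| ^ q := fun u hu hu₀ => by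
    have hut : |u| ≤ |t| := by simpa using abs_sub_left_of_mem_uIcc (uIoc_subset_uIcc hu)
    have huδ : u ∈ Metric.ball 0 δ := by
      simp only [mem_ball_zero_iff, norm_eq_abs] at htδ ⊢
      exact hut.trans_lt htδ
    calc ‖r u‖ ≤ ε * ‖|u| ^ q‖ := hbound ⟨huδ, hu₀⟩
      _ = ε * |u| ^ q := by rw [norm_of_nonneg (by positivity)]
      _ ≤ ε * |t| ^ q := by gcongr
  calc ‖∫ u in (0 : ℝ)..t, r u‖ ≤ ε * |t| ^ q * |t - 0| :=
        norm_integral_le_of_norm_le_const_ae <|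
          (volume.ae_ne 0).mono fun u hu₀ hu => hrt u hu hu₀
    _ = ε * ‖t * |t| ^ q‖ := by
      rw [norm_mul, norm_of_nonneg (show 0 ≤ |t| ^ q by positivity), sub_zero, norm_eq_abs]
      ring

lemma intervalIntegrable_abs_rpow {p : ℝ} (hp : -1 < p) (a b : ℝ) :
    IntervalIntegrable (fun u => |u| ^ p) volume a b := by
  refine intervalIntegrable_of_even (fun u => by rw [abs_neg]) (fun t ht => ?_)
  refine (intervalIntegrable_rpow' hp).congr fun u hu => ?_
  rw [uIoc_of_le ht.le] at hu
  simp only [abs_of_pos hu.1]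

lemma integral_abs_rpow_mul_pow {p : ℝ} (hp : -1 < p) (k : ℕ) (t : ℝ) :
    ∫ u in (0 : ℝ)..t, |u| ^ p * u ^ k = t * |t| ^ p * t ^ k / (p + k + 1) := by
  have hpk : -1 < p + k := by linarith [(Nat.cast_nonneg k : (0 : ℝ) ≤ k)]
  have hunit : ∫ v in (0 : ℝ)..1, |v| ^ p * v ^ k = 1 / (p + k + 1) := by
    rw [integral_congr_ae (g := fun v => v ^ (p + k)), integral_rpow (.inl hpk)]
    · rw [one_rpow, zero_rpow (by linarith), sub_zero]
    · refine .of_forall fun v hv => ?_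
      rw [uIoc_of_le zero_le_one] at hv
      rw [abs_of_pos hv.1, rpow_add_natCast hv.1.ne']
  calc ∫ u in (0 : ℝ)..t, |u| ^ p * u ^ k = t * ∫ v in (0 : ℝ)..1, |t * v| ^ p * (t * v) ^ k := by
        simpa using
          (smul_integral_comp_mul_left (a := 0) (b := 1) (fun u => |u| ^ p * u ^ k) t).symm
    _ = t * ∫ v in (0 : ℝ)..1, |t| ^ p * t ^ k * (|v| ^ p * v ^ k) := by
        congr 2 with v
        rw [abs_mul, mul_rpow (abs_nonneg t) (abs_nonneg v)]
        ring
    _ = t * |t| ^ p * t ^ k / (p + k + 1) := by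
        rw [intervalIntegral.integral_const_mul, hunit]
        ring

lemma integral_abs_rpow_smul_quadratic [CompleteSpace E] {p : ℝ} (hp : -1 < p) (a b c : E)
    (t : ℝ) :
    ∫ u in (0 : ℝ)..t, |u| ^ p • (a + u • b + u ^ 2 • c) =
      (t * |t| ^ p) • ((p + 1)⁻¹ • a + t • (p + 2)⁻¹ • b + t ^ 2 • (p + 3)⁻¹ • c) := by
  have hint (k : ℕ) (v : E) : IntervalIntegrable (fun u => (|u| ^ p * u ^ k) • v) volume 0 t :=
    ((intervalIntegrable_abs_rpow hp 0 t).mul_continuousOn (by fun_prop)).smul_continuousOn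
      continuousOn_const
  have hmonomial (k : ℕ) (v : E) : ∫ u in (0 : ℝ)..t, (|u| ^ p * u ^ k) • v =
      (t * |t| ^ p * t ^ k / (p + k + 1)) • v := by
    rw [intervalIntegral.integral_smul_const, integral_abs_rpow_mul_pow hp]
  calc ∫ u in (0 : ℝ)..t, |u| ^ p • (a + u • b + u ^ 2 • c)
      = ∫ u in (0 : ℝ)..t, (|u| ^ p * u ^ 0) • a + (|u| ^ p * u ^ 1) • b
          + (|u| ^ p * u ^ 2) • c := by
        congr 1 with u
        module
    _ = (t * |t| ^ p) • ((p + 1)⁻¹ • a + t • (p + 2)⁻¹ • b + t ^ 2 • (p + 3)⁻¹ • c) := by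
        rw [intervalIntegral.integral_add ((hint 0 a).add (hint 1 b)) (hint 2 c),
          intervalIntegral.integral_add (hint 0 a) (hint 1 b), hmonomial, hmonomial, hmonomial]
        push_cast
        ring_nf
        module

lemma HasTwoJet.integral_abs_rpow_smul [CompleteSpace E] {f : ℝ → E} {a b c : E} {p : ℝ}
    (hp : -1 < p) (hf : HasTwoJet f a b c)
    (hint : ∀ᶠ t in 𝓝[≠] 0, IntervalIntegrable (fun u => |u| ^ p • f u) volume 0 t) :
    HasTwoJet (fun t => (t * |t| ^ p)⁻¹ • ∫ u in (0 : ℝ)..t, |u| ^ p • f u)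
      ((p + 1)⁻¹ • a) ((p + 2)⁻¹ • b) ((p + 3)⁻¹ • c) := by
  set P : ℝ → E := fun u => a + u • b + u ^ 2 • c
  have hsq : ∀ t : ℝ, t ≠ 0 → |t| ^ (p + 2) = |t| ^ p * t ^ 2 := fun t ht => by
    rw [rpow_add (abs_pos.2 ht), rpow_two, sq_abs]
  have hrem : (fun u => |u| ^ p • (f u - P u)) =o[𝓝[≠] 0] fun u => |u| ^ (p + 2) :=
    ((isBigO_refl (fun u : ℝ => |u| ^ p) (𝓝[≠] 0)).smul_isLittleO hf).congr' .rfl <|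
      eventually_mem_nhdsWithin.mono fun t ht => (hsq t ht).symm
  have hremInt := (isBigO_refl (fun t : ℝ => (t * |t| ^ p)⁻¹) (𝓝[≠] 0)).smul_isLittleO
    (isLittleO_integral_of_isLittleO_abs_rpow (by linarith) hrem)
  refine hremInt.congr' ?_ ?_
  · filter_upwards [self_mem_nhdsWithin, hint] with t (ht : t ≠ 0) hft
    have hPint : IntervalIntegrable (fun u => |u| ^ p • P u) volume 0 t :=
      (intervalIntegrable_abs_rpow hp 0 t).smul_continuousOn (by fun_prop)
    have hpos : 0 < |t| ^ p := rpow_pos_of_pos (abs_pos.2 ht) p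
    simp only [smul_sub]
    rw [intervalIntegral.integral_sub hft hPint, integral_abs_rpow_smul_quadratic hp, smul_sub,
      inv_smul_smul₀ (mul_ne_zero ht hpos.ne')]
  · filter_upwards [self_mem_nhdsWithin] with t (ht : t ≠ 0)
    rw [hsq t ht, smul_eq_mul]
    field_simp

end WeightedIntegral

section IteratedDeriv

variable {E : Type*} [NormedAddCommGroup E] [NormedSpace ℝ E] {f : ℝ → E}

lemma hasTwoJet_iteratedDeriv (k : ℕ) (hf : ContDiff ℝ (k + 2 : ℕ) f) :
    HasTwoJet (iteratedDeriv k f) (iteratedDeriv k f 0) (iteratedDeriv (k + 1) f 0)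
      ((2 : ℝ)⁻¹ • iteratedDeriv (k + 2) f 0) := by
  have htaylor := (taylor_isLittleO_iteratedDeriv k 2 hf 0).mono (nhdsWithin_le_nhds (s := {0}ᶜ))
  refine htaylor.congr (fun t => ?_) fun t => by rw [sub_zero]
  simp only [Finset.sum_range_succ, Finset.sum_range_zero, Nat.factorial, add_zero, sub_zero]
  push_cast
  module

lemma hasTwoJet_smul_iteratedDeriv (k : ℕ) (hf : ContDiff ℝ (k + 1 : ℕ) f) :
    HasTwoJet (fun t => t • iteratedDeriv k f t) 0 (iteratedDeriv k f 0)
      (iteratedDeriv (k + 1) f 0) := by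
  have htaylor := (taylor_isLittleO_iteratedDeriv k 1 hf 0).mono (nhdsWithin_le_nhds (s := {0}ᶜ))
  refine ((isBigO_refl (fun t : ℝ => t) _).smul_isLittleO htaylor).congr (fun t => ?_)
    fun t => by simp [sq]
  simp only [Finset.sum_range_succ, Finset.sum_range_zero, Nat.factorial, add_zero, sub_zero]
  push_cast
  module

lemma hasTwoJet_inv_smul_iteratedDeriv (k : ℕ) (hf : ContDiff ℝ (k + 3 : ℕ) f)
    (hzero : iteratedDeriv k f 0 = 0) :
    HasTwoJet (fun t => t⁻¹ • iteratedDeriv k f t) (iteratedDeriv (k + 1) f 0)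
      ((2 : ℝ)⁻¹ • iteratedDeriv (k + 2) f 0) ((6 : ℝ)⁻¹ • iteratedDeriv (k + 3) f 0) := by
  have htaylor := (taylor_isLittleO_iteratedDeriv k 3 hf 0).mono (nhdsWithin_le_nhds (s := {0}ᶜ))
  simpa only [pow_one] using HasTwoJet.of_pow_remainder 1 <|
    htaylor.congr (fun t => by
      simp only [Finset.sum_range_succ, Finset.sum_range_zero, Nat.factorial, hzero, add_zero,
        sub_zero, smul_zero]
      push_cast
      module) fun t => by rw [sub_zero]

lemma hasTwoJet_inv_smul_iteratedDeriv_succ_sub (k : ℕ) (hf : ContDiff ℝ (k + 4 : ℕ) f)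
    (hzero : iteratedDeriv k f 0 = 0) :
    HasTwoJet (fun t => t⁻¹ • (iteratedDeriv (k + 1) f t - t⁻¹ • iteratedDeriv k f t))
      ((2 : ℝ)⁻¹ • iteratedDeriv (k + 2) f 0) ((3 : ℝ)⁻¹ • iteratedDeriv (k + 3) f 0)
      ((8 : ℝ)⁻¹ • iteratedDeriv (k + 4) f 0) := by
  have htaylor := (taylor_isLittleO_iteratedDeriv k 4 hf 0).mono (nhdsWithin_le_nhds (s := {0}ᶜ))
  have htaylorSucc := (taylor_isLittleO_iteratedDeriv (k + 1) 3 hf 0).mono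
    (nhdsWithin_le_nhds (s := {0}ᶜ))
  simp only [sub_zero] at htaylor htaylorSucc
  have htaylorDiv := ((isBigO_refl (fun t : ℝ => t⁻¹) _).smul_isLittleO htaylor).congr'
    (g₂ := fun t => t ^ 3) .rfl <| eventually_mem_nhdsWithin.mono fun t (ht : t ≠ 0) => by
      simp only [smul_eq_mul, pow_succ' t 3, inv_mul_cancel_left₀ ht]
  have hdiff := htaylorSucc.sub htaylorDiv
  simpa only [pow_one] using HasTwoJet.of_pow_remainder 1 <|
    hdiff.congr' (eventually_mem_nhdsWithin.mono fun t (ht : t ≠ 0) => by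
      simp only [Finset.sum_range_succ, Finset.sum_range_zero, Nat.factorial, hzero, add_assoc,
        Nat.reduceAdd, add_zero, smul_zero]
      push_cast
      match_scalars <;> field_simp <;> ring) .rfl

end IteratedDeriv

section Cusp

variable {γ : ℝ → ℝ × ℝ}

lemma HasTwoJet.det2 {f g : ℝ → ℝ × ℝ} {a b c a' b' c' : ℝ × ℝ} (hf : HasTwoJet f a b c)
    (hg : HasTwoJet g a' b' c') :
    HasTwoJet (fun t => det2 (f t) (g t)) (det2 a a') (det2 a b' + det2 b a')
      (det2 a c' + det2 b b' + det2 c a') := by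
  have hjet : HasTwoJet (fun t => (f t).1 * (g t).2 - (f t).2 * (g t).1) _ _ _ :=
    (hf.fst.mul hg.snd).sub (hf.snd.mul hg.fst)
  convert hjet using 1 <;> simp only [_root_.det2] <;> ring

/-- The bracket `[γ⁽ⁱ⁾, γ⁽ʲ⁾]`. -/
def detDeriv (γ : ℝ → ℝ × ℝ) (i j : ℕ) (t : ℝ) : ℝ :=
  det2 (iteratedDeriv i γ t) (iteratedDeriv j γ t)

/-- The quotient `[γ', γ'']/t²`, which has a nonzero limit at a 3/2-cusp. -/
def cuspDet (γ : ℝ → ℝ × ℝ) (t : ℝ) : ℝ := detDeriv γ 1 2 t / t ^ 2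

/-- The numerator of `9 κ_A` divided by `t²`; at a 3/2-cusp it has a nonzero limit. -/
def cuspNumerator (γ : ℝ → ℝ × ℝ) (t : ℝ) : ℝ :=
  3 * cuspDet γ t * detDeriv γ 1 4 t + 12 * cuspDet γ t * detDeriv γ 2 3 t
    - 5 * (detDeriv γ 1 3 t / t) ^ 2

/-- The affine arclength divided by its order of vanishing `t |t|^(2/3)` at a 3/2-cusp. -/
def cuspArclength (γ : ℝ → ℝ × ℝ) (t : ℝ) : ℝ := (t * |t| ^ ((2 : ℝ) / 3))⁻¹ * sA γ t

lemma hasTwoJet_cuspDet (hγ : ContDiff ℝ 5 γ) (hzero : deriv γ 0 = 0) :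
    HasTwoJet (cuspDet γ) (detDeriv γ 2 3 0 / 2) (detDeriv γ 2 4 0 / 3)
      (detDeriv γ 2 5 0 / 8 + detDeriv γ 3 4 0 / 12) := by
  have hzero' : iteratedDeriv 1 γ 0 = 0 := by rwa [iteratedDeriv_one]
  have hvelocity := hasTwoJet_inv_smul_iteratedDeriv 1 (hγ.of_le (by norm_num)) hzero'
  have hdiff := hasTwoJet_inv_smul_iteratedDeriv_succ_sub 1 hγ hzero'
  -- `[γ', γ''] / t² = [γ' / t, (γ'' - γ' / t) / t]`, and the second entry has a limit since
  -- `γ''` and `γ' / t` have the same limit at `0`.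
  have hjet : HasTwoJet (cuspDet γ) _ _ _ := (hvelocity.det2 hdiff).congr fun t _ => by
    simp only [cuspDet, detDeriv, det2, Prod.smul_fst, Prod.smul_snd, Prod.fst_sub, Prod.snd_sub,
      smul_eq_mul]
    ring
  convert hjet using 1 <;>
    simp only [detDeriv, det2, Prod.smul_fst, Prod.smul_snd, smul_eq_mul] <;> ring

lemma hasTwoJet_detDeriv_one_three_div (hγ : ContDiff ℝ 5 γ) (hzero : deriv γ 0 = 0) :
    HasTwoJet (fun t => detDeriv γ 1 3 t / t) (detDeriv γ 2 3 0) (detDeriv γ 2 4 0)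
      (detDeriv γ 2 5 0 / 2 + detDeriv γ 3 4 0 / 3) := by
  have hvelocity := hasTwoJet_inv_smul_iteratedDeriv 1 (hγ.of_le (by norm_num))
    (by rwa [iteratedDeriv_one])
  have hjet : HasTwoJet (fun t => detDeriv γ 1 3 t / t) _ _ _ :=
    (hvelocity.det2 (hasTwoJet_iteratedDeriv 3 hγ)).congr fun t _ => by
      simp only [detDeriv, det2, Prod.smul_fst, Prod.smul_snd, smul_eq_mul]
      ring
  convert hjet using 1 <;>
    simp only [detDeriv, det2, Prod.smul_fst, Prod.smul_snd, smul_eq_mul] <;> ring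

lemma hasTwoJet_detDeriv_one_four (hγ : ContDiff ℝ 5 γ) (hzero : deriv γ 0 = 0) :
    HasTwoJet (detDeriv γ 1 4) 0 (detDeriv γ 2 4 0)
      (detDeriv γ 2 5 0 + detDeriv γ 3 4 0 / 2) := by
  have hvelocity := hasTwoJet_inv_smul_iteratedDeriv 1 (hγ.of_le (by norm_num))
    (by rwa [iteratedDeriv_one])
  have hjet : HasTwoJet (detDeriv γ 1 4) _ _ _ :=
    (hvelocity.det2 (hasTwoJet_smul_iteratedDeriv 4 hγ)).congr fun t ht => by
      simp only [detDeriv, det2, Prod.smul_fst, Prod.smul_snd, smul_eq_mul]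
      field_simp
  convert hjet using 1 <;>
    simp only [detDeriv, det2, Prod.smul_fst, Prod.smul_snd, smul_eq_mul, Prod.fst_zero,
      Prod.snd_zero] <;>
    ring

lemma hasTwoJet_detDeriv_two_three (hγ : ContDiff ℝ 5 γ) :
    HasTwoJet (detDeriv γ 2 3) (detDeriv γ 2 3 0) (detDeriv γ 2 4 0)
      ((detDeriv γ 2 5 0 + detDeriv γ 3 4 0) / 2) := by
  have hjet : HasTwoJet (detDeriv γ 2 3) _ _ _ :=
    (hasTwoJet_iteratedDeriv 2 (hγ.of_le (by norm_num))).det2 (hasTwoJet_iteratedDeriv 3 hγ)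
  convert hjet using 1 <;>
    simp only [detDeriv, det2, Prod.smul_fst, Prod.smul_snd, smul_eq_mul] <;> ring

lemma hasTwoJet_cuspNumerator (hγ : ContDiff ℝ 5 γ) (hzero : deriv γ 0 = 0) :
    HasTwoJet (cuspNumerator γ) (detDeriv γ 2 3 0 ^ 2)
      (3 / 2 * detDeriv γ 2 3 0 * detDeriv γ 2 4 0)
      (detDeriv γ 2 3 0 * (detDeriv γ 2 5 0 + 17 / 12 * detDeriv γ 3 4 0)) := by
  have hg := hasTwoJet_cuspDet hγ hzero
  have hone := hasTwoJet_detDeriv_one_three_div hγ hzero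
  have hjet : HasTwoJet (cuspNumerator γ) _ _ _ :=
    ((((hg.mul (hasTwoJet_detDeriv_one_four hγ hzero)).const_smul 3).add
      ((hg.mul (hasTwoJet_detDeriv_two_three hγ)).const_smul 12)).sub
      ((hone.mul hone).const_smul 5)).congr fun t _ => by
        simp only [cuspNumerator, smul_eq_mul]
        ring
  convert hjet using 1 <;>
    simp only [smul_eq_mul] <;> ring

lemma sA_integrand_eq (hzero : deriv γ 0 = 0) (u : ℝ) :
    |det2 (deriv γ u) (iteratedDeriv 2 γ u)| ^ ((1 : ℝ) / 3) =
      |u| ^ ((2 : ℝ) / 3) * |cuspDet γ u| ^ ((1 : ℝ) / 3) := by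
  have hdet : |det2 (deriv γ u) (iteratedDeriv 2 γ u)| = |u| ^ (2 : ℝ) * |cuspDet γ u| := by
    rw [cuspDet, detDeriv, iteratedDeriv_one]
    rcases eq_or_ne u 0 with rfl | hu
    · simp [hzero, det2]
    · rw [abs_div, rpow_two, abs_pow, mul_div_cancel₀ _ (by positivity)]
  rw [hdet, mul_rpow (by positivity) (abs_nonneg _), ← rpow_mul (abs_nonneg u)]
  norm_num

lemma continuous_abs_det2_deriv_rpow (hγ : ContDiff ℝ 2 γ) :
    Continuous fun u => |det2 (deriv γ u) (iteratedDeriv 2 γ u)| ^ ((1 : ℝ) / 3) := by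
  have hvelocity : Continuous (deriv γ) := hγ.continuous_deriv (by norm_num)
  unfold det2
  exact Continuous.rpow_const (by fun_prop) fun _ => .inr (by norm_num)

lemma hasTwoJet_cuspArclength {a b c : ℝ} (hγ : ContDiff ℝ 2 γ) (hzero : deriv γ 0 = 0)
    (hdet : HasTwoJet (cuspDet γ) a b c) (ha : a ≠ 0) :
    HasTwoJet (cuspArclength γ) (|a| ^ ((1 : ℝ) / 3) * (3 / 5))
      (|a| ^ ((1 : ℝ) / 3) * (1 / 8 * (b / a)))
      (|a| ^ ((1 : ℝ) / 3) * (1 / 11 * (c / a) - 1 / 33 * (b / a) ^ 2)) := by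
  have hroot := hdet.abs_rpow ha (1 / 3)
  have hint (t : ℝ) : IntervalIntegrable
      (fun u => |u| ^ ((2 : ℝ) / 3) • |cuspDet γ u| ^ ((1 : ℝ) / 3)) volume 0 t := by
    simp only [smul_eq_mul, ← sA_integrand_eq hzero]
    exact (continuous_abs_det2_deriv_rpow hγ).intervalIntegrable 0 t
  have hjet : HasTwoJet (cuspArclength γ) _ _ _ :=
    (hroot.integral_abs_rpow_smul (by norm_num) (.of_forall hint)).congr fun t _ => by
      simp only [cuspArclength, sA, sA_integrand_eq hzero, smul_eq_mul]
  convert hjet using 1 <;>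
    simp only [smul_eq_mul] <;> ring

lemma sA_eq_cuspArclength (γ : ℝ → ℝ × ℝ) {t : ℝ} (ht : t ≠ 0) :
    sA γ t = t * |t| ^ ((2 : ℝ) / 3) * cuspArclength γ t := by
  rw [cuspArclength, mul_inv_cancel_left₀ (by positivity)]

lemma kappaA_eq_cuspNumerator (γ : ℝ → ℝ × ℝ) {t : ℝ} (ht : t ≠ 0) :
    kappaA γ t = (t * |t| ^ ((2 : ℝ) / 3))⁻¹ ^ 2 *
      (9⁻¹ * cuspNumerator γ t * |cuspDet γ t| ^ (-(8 : ℝ) / 3)) := by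
  have hdet : detDeriv γ 1 2 t = t ^ 2 * cuspDet γ t := by
    rw [cuspDet, mul_div_cancel₀ _ (pow_ne_zero 2 ht)]
  have hnumerator : 3 * detDeriv γ 1 2 t * detDeriv γ 1 4 t +
      12 * detDeriv γ 1 2 t * detDeriv γ 2 3 t - 5 * detDeriv γ 1 3 t ^ 2 =
      t ^ 2 * cuspNumerator γ t := by
    rw [cuspNumerator, hdet]
    field_simp
  have hdenominator : |detDeriv γ 1 2 t| ^ ((8 : ℝ) / 3) =
      t ^ 2 * (t * |t| ^ ((2 : ℝ) / 3)) ^ 2 * |cuspDet γ t| ^ ((8 : ℝ) / 3) := by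
    have hpow : (t ^ 2) ^ ((8 : ℝ) / 3) = t ^ 2 * (t * |t| ^ ((2 : ℝ) / 3)) ^ 2 := by
      rw [mul_pow, ← rpow_mul_natCast (abs_nonneg t), ← mul_assoc, ← sq_abs, ← pow_add,
        ← rpow_natCast, ← rpow_natCast, ← rpow_mul (abs_nonneg t), ← rpow_add (abs_pos.2 ht)]
      norm_num
    rw [hdet, abs_mul, abs_of_nonneg (sq_nonneg t), mul_rpow (sq_nonneg t) (abs_nonneg _), hpow]
  have hkappa : kappaA γ t =
      t ^ 2 * cuspNumerator γ t / (9 * |detDeriv γ 1 2 t| ^ ((8 : ℝ) / 3)) := by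
    simp only [← hnumerator, kappaA, detDeriv, iteratedDeriv_one]
  rw [hkappa, hdenominator, neg_div, rpow_neg (abs_nonneg _)]
  field_simp

lemma abs_detDeriv_rpow_mul_muA (hcusp : HasCusp γ) :
    |detDeriv γ 2 3 0| ^ ((2 : ℝ) / 5) * muA γ =
      (24 * detDeriv γ 2 3 0 * detDeriv γ 2 5 0 + 60 * detDeriv γ 2 3 0 * detDeriv γ 3 4 0
        - 35 * detDeriv γ 2 4 0 ^ 2) / detDeriv γ 2 3 0 ^ 2 := by
  have hD : 0 < |detDeriv γ 2 3 0| := abs_pos.2 hcusp.2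
  have hpow : |detDeriv γ 2 3 0| ^ ((12 : ℝ) / 5) =
      |detDeriv γ 2 3 0| ^ ((2 : ℝ) / 5) * detDeriv γ 2 3 0 ^ 2 := by
    rw [← sq_abs, ← rpow_two, ← rpow_add hD]
    norm_num
  rw [← mul_div_mul_left _ (detDeriv γ 2 3 0 ^ 2) (rpow_pos_of_pos hD _).ne', ← hpow,
    mul_div_assoc]
  rfl

lemma hasTwoJet_sA_sq_mul_kappaA (hγ : ContDiff ℝ 5 γ) (hcusp : HasCusp γ) :
    HasTwoJet (fun t => sA γ t ^ 2 * kappaA γ t) (4 / 25) 0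
      (3 / 1100 * (|detDeriv γ 2 3 0| ^ ((2 : ℝ) / 5) * muA γ)) := by
  rw [abs_detDeriv_rpow_mul_muA hcusp]
  have hD : detDeriv γ 2 3 0 ≠ 0 := hcusp.2
  have ha : detDeriv γ 2 3 0 / 2 ≠ 0 := div_ne_zero hD two_ne_zero
  have hdet := hasTwoJet_cuspDet hγ hcusp.1
  have harclength := hasTwoJet_cuspArclength (hγ.of_le (by norm_num)) hcusp.1 hdet ha
  have hcurvature := (hasTwoJet_cuspNumerator hγ hcusp.1).mul (hdet.abs_rpow ha (-8 / 3))
  have hjet : HasTwoJet (fun t => sA γ t ^ 2 * kappaA γ t) _ _ _ :=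
    ((harclength.mul harclength).mul (hcurvature.const_smul 9⁻¹)).congr fun t ht => by
      rw [sA_eq_cuspArclength γ ht, kappaA_eq_cuspNumerator γ ht, smul_eq_mul]
      field_simp
  generalize detDeriv γ 2 3 0 = D at hD ha hjet ⊢
  have hroot : |D / 2| ^ ((1 : ℝ) / 3) ≠ 0 := (rpow_pos_of_pos (abs_pos.2 ha) _).ne'
  have hcancel : |D / 2| ^ (-(8 : ℝ) / 3) = ((D / 2) ^ 2)⁻¹ / (|D / 2| ^ ((1 : ℝ) / 3)) ^ 2 := by
    have hpos : 0 < |D / 2| := abs_pos.2 ha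
    rw [← sq_abs (D / 2), ← rpow_mul_natCast hpos.le, ← rpow_natCast, ← rpow_neg hpos.le,
      ← rpow_sub hpos]
    norm_num
  simp only [smul_eq_mul, hcancel] at hjet
  generalize |D / 2| ^ ((1 : ℝ) / 3) = A at hroot hjet
  convert hjet using 1 <;> field_simp <;> ring

lemma sign_mul_abs_sA_rpow_sq (γ : ℝ → ℝ × ℝ) {t : ℝ} (ht : t ≠ 0) :
    (Real.sign t * |sA γ t| ^ ((3 : ℝ) / 5)) ^ 2 = t ^ 2 * |cuspArclength γ t| ^ ((6 : ℝ) / 5) := by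
  have hsign : Real.sign t ^ 2 = 1 := by
    rcases Real.sign_apply_eq_of_ne_zero t ht with h | h <;> norm_num [h]
  have hweight : |t * |t| ^ ((2 : ℝ) / 3)| = |t| ^ ((5 : ℝ) / 3) := by
    rw [abs_mul, abs_of_nonneg (rpow_nonneg (abs_nonneg t) _), ← rpow_one_add' (abs_nonneg t)] <;>
      norm_num
  rw [mul_pow, hsign, one_mul, ← rpow_mul_natCast (abs_nonneg _), sA_eq_cuspArclength γ ht, abs_mul,
    hweight, mul_rpow (by positivity) (abs_nonneg _), ← rpow_mul (abs_nonneg t)]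
  norm_num

lemma cusp_constant {D : ℝ} (hD : D ≠ 0) :
    3 / 1100 * |D| ^ ((2 : ℝ) / 5) / (|D / 2| ^ ((1 : ℝ) / 3) * (3 / 5)) ^ ((6 : ℝ) / 5) =
      1 / 220 * ((20 : ℝ) / 3) ^ ((1 : ℝ) / 5) := by
  have hroot : (|D / 2| ^ ((1 : ℝ) / 3) * (3 / 5)) ^ ((6 : ℝ) / 5) =
      |D| ^ ((2 : ℝ) / 5) * ((3 / 5) ^ ((6 : ℝ) / 5) / 2 ^ ((2 : ℝ) / 5)) := by
    rw [mul_rpow (by positivity) (by norm_num), ← rpow_mul (abs_nonneg _), abs_div, abs_two,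
      div_rpow (abs_nonneg D) zero_le_two]
    norm_num
    ring
  have hthree_fifths : ((3 : ℝ) / 5) ^ ((6 : ℝ) / 5) = 3 / 5 * (3 / 5) ^ ((1 : ℝ) / 5) := by
    rw [← rpow_one_add' (by norm_num) (by norm_num)]
    norm_num
  have htwo : (2 : ℝ) ^ ((2 : ℝ) / 5) = 4 ^ ((1 : ℝ) / 5) := by
    rw [show (4 : ℝ) = 2 ^ (2 : ℝ) by norm_num, ← rpow_mul zero_le_two]
    norm_num
  have htwenty_thirds : ((20 : ℝ) / 3) ^ ((1 : ℝ) / 5) =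
      4 ^ ((1 : ℝ) / 5) / (3 / 5) ^ ((1 : ℝ) / 5) := by
    rw [← div_rpow (by norm_num) (by norm_num)]
    norm_num
  rw [hroot, hthree_fifths, htwo, htwenty_thirds]
  field_simp
  norm_num

end Cusp

theorem stmt_9_general (γ : ℝ → ℝ × ℝ) (hγ : ContDiff ℝ 5 γ) (hcusp : HasCusp γ) :
    Tendsto (fun t => (sA γ t ^ 2 * kappaA γ t - 4/25)
        / (Real.sign t * |sA γ t| ^ ((3:ℝ)/5)) ^ 2)
      (𝓝[≠] (0:ℝ)) (𝓝 ((1/220) * ((20:ℝ)/3) ^ ((1:ℝ)/5) * muA γ)) := by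
  have hD : detDeriv γ 2 3 0 ≠ 0 := hcusp.2
  have ha : detDeriv γ 2 3 0 / 2 ≠ 0 := div_ne_zero hD two_ne_zero
  have hlimit : 0 < |detDeriv γ 2 3 0 / 2| ^ ((1 : ℝ) / 3) * (3 / 5) := by positivity
  have hcentered : HasTwoJet (fun t => sA γ t ^ 2 * kappaA γ t - 4 / 25) _ _ _ :=
    (hasTwoJet_sA_sq_mul_kappaA hγ hcusp).sub (.const (4 / 25))
  simp only [sub_self, sub_zero] at hcentered
  have harclength := (hasTwoJet_cuspArclength (hγ.of_le (by norm_num)) hcusp.1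
    (hasTwoJet_cuspDet hγ hcusp.1) ha).tendsto.abs
  rw [abs_of_pos hlimit] at harclength
  have hparameter := harclength.rpow_const (p := 6 / 5) (.inr (by norm_num))
  rw [← cusp_constant hD, div_mul_eq_mul_div, mul_assoc]
  refine (hcentered.tendsto_inv_sq_smul.div hparameter (by positivity)).congr' ?_
  filter_upwards [self_mem_nhdsWithin] with t (ht : t ≠ 0)
  rw [sign_mul_abs_sA_rpow_sq γ ht, Pi.div_apply, smul_eq_mul, inv_mul_eq_div, div_div]

/-- At a 3/2-cusp, `lim_{t→0} ((s_A)²κ_A − 4/25)/τ² = (1/220)·(20/3)^{1/5}·μ_A`,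
where `τ = sgn(t)·|s_A(t)|^{3/5}`. -/
theorem stmt_9 (γ : ℝ → ℝ × ℝ) (hγ : ContDiff ℝ (⊤:ℕ∞) γ) (hcusp : HasCusp γ)
    (hreg : ∀ᶠ t in 𝓝[≠] (0:ℝ), det2 (deriv γ t) (iteratedDeriv 2 γ t) ≠ 0) :
    Tendsto (fun t => (sA γ t ^ 2 * kappaA γ t - 4/25)
        / (Real.sign t * |sA γ t| ^ ((3:ℝ)/5)) ^ 2)
      (𝓝[≠] (0:ℝ)) (𝓝 ((1/220) * ((20:ℝ)/3) ^ ((1:ℝ)/5) * muA γ)) :=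
  stmt_9_general γ (contDiff_infty.1 hγ 5) hcusp
end
end

section
/- Let γ : ℝ → ℝ² be a C^∞ regular curve with a generic inflection point at t = 0, with [γ'(t), γ''(t)] ≠ 0 for t ≠ 0 near 0, and let F be the C^∞ extension of the normalized affine curvature function (s_A)²·κ_A at t = 0 (as a function of the original parameter t). Then −(9/7)·(([γ'(0), γ⁽⁴⁾(0)] + [γ''(0), γ'''(0)])/[γ'(0), γ'''(0)])·F'(0) + 32·F'(0)² + 9·F''(0) = 0. -/
noncomputable section
open Real Set Filter Topology

/-!
Write `d = [γ', γ'']` and `e = [γ'', γ''']`, so that `s_A' = |d|^(1/3)` and the numerator of `κ_A`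
is `N = 3 d d'' + 9 d e - 5 d'²`. The quotient `h = s_A / (d |d|^(1/3))` solves the singular linear
equation `d h' + (4/3) d' h = 1`, and `9 s_A² κ_A = h² N`. Since `N(0) ≠ 0`, the smooth extension of
`s_A² κ_A` yields one of `h²`, and the equation recovers `h = (d (h²)' + (8/3) d' h²) / 2` from it.
Hence `h` has a smooth extension `k`, which solves the same equation across the zero of `d`, and
differentiating the equation there yields the 2-jet of `k`. Eliminating `d' k` from `9 F = k² N`
leaves `F = -5/16 + d R` with `R` smooth, and the 1-jet of `R` at `0` gives `F'(0)` and `F''(0)`.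
-/

open scoped ContDiff

section IteratedDeriv

variable {𝕜 E : Type*} [NontriviallyNormedField 𝕜] [NormedAddCommGroup E] [NormedSpace 𝕜 E]

theorem hasDerivAt_iteratedDeriv_of_contDiffAt {f : 𝕜 → E} {x : 𝕜} {n : ℕ∞ω} {k : ℕ}
    (hf : ContDiffAt 𝕜 n f x) (hk : k < n) :
    HasDerivAt (iteratedDeriv k f) (iteratedDeriv (k + 1) f x) x := by
  have hdiff : DifferentiableAt 𝕜 (iteratedDeriv k f) x := by
    rw [iteratedDeriv_eq_equiv_comp]
    exact (LinearIsometryEquiv.differentiable _).differentiableAt.comp x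
      (hf.differentiableAt_iteratedFDeriv hk)
  rw [iteratedDeriv_succ]
  exact hdiff.hasDerivAt

theorem deriv_const_add_mul_of_eq_zero {f g : 𝕜 → 𝕜} {x : 𝕜} (c : 𝕜)
    (hf : DifferentiableAt 𝕜 f x) (hg : DifferentiableAt 𝕜 g x) (hx : f x = 0) :
    deriv (fun t => c + f t * g t) x = deriv f x * g x := by
  rw [deriv_const_add, deriv_fun_mul hf hg, hx, zero_mul, add_zero]

theorem iteratedDeriv_two_const_add_mul_of_eq_zero {f g : 𝕜 → 𝕜} {x : 𝕜} (c : 𝕜)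
    (hf : ContDiffAt 𝕜 2 f x) (hg : ContDiffAt 𝕜 2 g x) (hx : f x = 0) :
    iteratedDeriv 2 (fun t => c + f t * g t) x
      = iteratedDeriv 2 f x * g x + 2 * (deriv f x * deriv g x) := by
  rw [iteratedDeriv_const_add two_pos, iteratedDeriv_fun_mul (n := 2) hf hg]
  simp only [Finset.sum_range_succ, Finset.range_zero, Finset.sum_empty, iteratedDeriv_zero,
    iteratedDeriv_one, hx, Nat.choose_one_right, Nat.choose_self, Nat.cast_one, Nat.cast_ofNat,
    Nat.sub_self, Nat.reduceSub]
  ring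

end IteratedDeriv

section SingularODE

/-- The function `h` is differentiable at `t` and solves the linear equation `d h' + q d' h = 1`
there. The equation is singular at the zeros of `d`, where it prescribes the value of `h`. -/
structure SolvesSingularODE (q : ℝ) (d h : ℝ → ℝ) (t : ℝ) : Prop where
  differentiableAt : DifferentiableAt ℝ h t
  eq_one : d t * deriv h t + q * (deriv d t * h t) = 1

/-- The function `s`, in applications a primitive of `|d| ^ p`, divided by `d |d| ^ p`, its order of
magnitude at a simple zero of `d`. The value at the zeros of `d` is the junk value `0`. -/
def normalizedPrimitive (p : ℝ) (d s : ℝ → ℝ) (t : ℝ) : ℝ :=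
  s t / (d t * |d t| ^ p)

variable {p q x t : ℝ} {d h k s G : ℝ → ℝ}

theorem hasDerivAt_mul_abs_rpow (ht : t ≠ 0) :
    HasDerivAt (fun u => u * |u| ^ p) ((p + 1) * |t| ^ p) t := by
  have hprod := (hasDerivAt_id' t).mul
    ((hasDerivAt_abs ht).rpow_const (p := p) (Or.inl (abs_ne_zero.mpr ht)))
  refine hprod.congr_deriv ?_
  have hsign : t * (SignType.sign t : ℝ) = |t| := self_mul_sign t
  have hpow : |t| * |t| ^ (p - 1) = |t| ^ p := by
    rw [Real.rpow_sub_one (abs_ne_zero.mpr ht), mul_div_cancel₀ _ (abs_ne_zero.mpr ht)]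
  linear_combination p * |t| ^ (p - 1) * hsign + p * hpow

theorem solvesSingularODE_normalizedPrimitive (hd : DifferentiableAt ℝ d t)
    (hs : HasDerivAt s (|d t| ^ p) t) (ht : d t ≠ 0) :
    SolvesSingularODE (p + 1) d (normalizedPrimitive p d s) t := by
  have hpow : |d t| ^ p ≠ 0 := (Real.rpow_pos_of_pos (abs_pos.mpr ht) p).ne'
  have hquot : HasDerivAt (normalizedPrimitive p d s) _ t :=
    hs.div ((hasDerivAt_mul_abs_rpow ht).comp t hd.hasDerivAt) (mul_ne_zero ht hpow)
  refine ⟨hquot.differentiableAt, ?_⟩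
  rw [hquot.deriv]
  simp only [normalizedPrimitive]
  field_simp
  ring

namespace SolvesSingularODE

theorem congr (hh : SolvesSingularODE q d h t) (hkh : k =ᶠ[𝓝 t] h) :
    SolvesSingularODE q d k t := by
  refine ⟨hh.differentiableAt.congr_of_eventuallyEq hkh, ?_⟩
  rw [hkh.deriv_eq, hkh.eq_of_nhds]
  exact hh.eq_one

theorem eq_of_eventuallyEq_sq (hh : SolvesSingularODE q d h t) (hG : G =ᶠ[𝓝 t] fun u => h u ^ 2) :
    (d t * deriv G t + 2 * q * (deriv d t * G t)) / 2 = h t := by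
  have hderiv : deriv G t = 2 * h t * deriv h t := by
    rw [hG.deriv_eq, (hh.differentiableAt.hasDerivAt.fun_pow 2).deriv]
    ring
  rw [hderiv, hG.eq_of_nhds]
  linear_combination h t * hh.eq_one

theorem exists_contDiffAt_extension (hd : ContDiffAt ℝ ∞ d x) (hG : ContDiffAt ℝ ∞ G x)
    (hGh : G =ᶠ[𝓝[≠] x] fun t => h t ^ 2)
    (hh : ∀ᶠ t in 𝓝[≠] x, SolvesSingularODE q d h t) :
    ∃ k : ℝ → ℝ, ContDiffAt ℝ ∞ k x ∧ k =ᶠ[𝓝[≠] x] h ∧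
      ∀ᶠ t in 𝓝 x, SolvesSingularODE q d k t := by
  have hd' : ContDiffAt ℝ ∞ (deriv d) x := hd.derivWithin (by simp)
  have hG' : ContDiffAt ℝ ∞ (deriv G) x := hG.derivWithin (by simp)
  set k : ℝ → ℝ := fun t => (d t * deriv G t + 2 * q * (deriv d t * G t)) / 2
  have hk : ContDiffAt ℝ ∞ k x := by fun_prop
  have hk' : ContDiffAt ℝ ∞ (deriv k) x := hk.derivWithin (by simp)
  have hkh : k =ᶠ[𝓝[≠] x] h := by
    filter_upwards [hh, eventually_nhdsNE_eventually_nhds_iff.mpr hGh] with t ht hGt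
    exact ht.eq_of_eventuallyEq_sq hGt
  have hk_off : ∀ᶠ t in 𝓝[≠] x, SolvesSingularODE q d k t := by
    filter_upwards [hh, eventually_nhdsNE_eventually_nhds_iff.mpr hkh] with t ht hkt
    exact ht.congr hkt
  have hk_eq : (fun t => d t * deriv k t + q * (deriv d t * k t)) =ᶠ[𝓝 x] fun _ => 1 := by
    have hcont : ContinuousAt (fun t => d t * deriv k t + q * (deriv d t * k t)) x :=
      ContDiffAt.continuousAt (n := ∞) (by fun_prop)
    rw [← hcont.eventuallyEq_nhds_iff_eventuallyEq_nhdsNE continuousAt_const]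
    exact hk_off.mono fun t ht => ht.eq_one
  have hk_diff : ∀ᶠ t in 𝓝 x, DifferentiableAt ℝ k t :=
    ((hk.of_le (m := 1) (by simp)).eventually (by simp)).mono
      fun t ht => ht.differentiableAt (by simp)
  exact ⟨k, hk, hkh, hk_diff.mp (hk_eq.mono fun t heq hdiff => ⟨hdiff, heq⟩)⟩

theorem deriv_lhs_eq_zero (hd : ContDiffAt ℝ 2 d x) (hk : ContDiffAt ℝ 2 k x)
    (hode : ∀ᶠ t in 𝓝 x, SolvesSingularODE q d k t) :
    d x * iteratedDeriv 2 k x + (1 + q) * (deriv d x * deriv k x)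
      + q * (iteratedDeriv 2 d x * k x) = 0 := by
  have hd0 : HasDerivAt d (deriv d x) x := (hd.differentiableAt (by simp)).hasDerivAt
  have hk0 : HasDerivAt k (deriv k x) x := (hk.differentiableAt (by simp)).hasDerivAt
  have hd1 := hasDerivAt_iteratedDeriv_of_contDiffAt (k := 1) hd (by norm_num)
  have hk1 := hasDerivAt_iteratedDeriv_of_contDiffAt (k := 1) hk (by norm_num)
  rw [iteratedDeriv_one] at hd1 hk1
  have hlhs := (hd0.fun_mul hk1).fun_add ((hd1.fun_mul hk0).const_mul q)
  have hconst : HasDerivAt (fun t => d t * deriv k t + q * (deriv d t * k t)) 0 x :=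
    (hasDerivAt_const x (1 : ℝ)).congr_of_eventuallyEq (hode.mono fun t ht => ht.eq_one)
  linear_combination hlhs.unique hconst

theorem iteratedDeriv_two_lhs_eq_zero (hd : ContDiffAt ℝ 3 d x) (hk : ContDiffAt ℝ 3 k x)
    (hode : ∀ᶠ t in 𝓝 x, SolvesSingularODE q d k t) :
    d x * iteratedDeriv 3 k x + (2 + q) * (deriv d x * iteratedDeriv 2 k x)
      + (1 + 2 * q) * (iteratedDeriv 2 d x * deriv k x) + q * (iteratedDeriv 3 d x * k x) = 0 := by
  have hd0 : HasDerivAt d (deriv d x) x := (hd.differentiableAt (by simp)).hasDerivAt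
  have hk0 : HasDerivAt k (deriv k x) x := (hk.differentiableAt (by simp)).hasDerivAt
  have hd1 := hasDerivAt_iteratedDeriv_of_contDiffAt (k := 1) hd (by norm_num)
  have hk1 := hasDerivAt_iteratedDeriv_of_contDiffAt (k := 1) hk (by norm_num)
  have hd2 := hasDerivAt_iteratedDeriv_of_contDiffAt (k := 2) hd (by norm_num)
  have hk2 := hasDerivAt_iteratedDeriv_of_contDiffAt (k := 2) hk (by norm_num)
  rw [iteratedDeriv_one] at hd1 hk1
  have hlhs := ((hd0.fun_mul hk2).fun_add ((hd1.fun_mul hk1).const_mul (1 + q))).fun_add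
    ((hd2.fun_mul hk0).const_mul q)
  have hzero : (fun t => d t * iteratedDeriv 2 k t + (1 + q) * (deriv d t * deriv k t)
      + q * (iteratedDeriv 2 d t * k t)) =ᶠ[𝓝 x] fun _ => 0 := by
    filter_upwards [(hd.of_le (m := 2) (by norm_num)).eventually (by simp),
      (hk.of_le (m := 2) (by norm_num)).eventually (by simp),
      eventually_eventually_nhds.mpr hode] with t hdt hkt hodet
    exact deriv_lhs_eq_zero hdt hkt hodet
  linear_combination hlhs.unique ((hasDerivAt_const x (0 : ℝ)).congr_of_eventuallyEq hzero)

end SolvesSingularODE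

end SingularODE

section AffineCurvatureJet

/-- The numerator of the affine curvature in terms of `d = [γ', γ'']` and `e = [γ'', γ''']`. -/
def affineNumerator (d e : ℝ → ℝ) (t : ℝ) : ℝ :=
  3 * (d t * iteratedDeriv 2 d t) + 9 * (d t * e t) - 5 * deriv d t ^ 2

/-- The smooth factor `R` in the decomposition `k² N / 9 = -5/16 + d R`, where `N` is
`affineNumerator d e` and `k` solves `d k' + (4/3) d' k = 1`. -/
def affineRemainder (d e k : ℝ → ℝ) (t : ℝ) : ℝ :=
  k t ^ 2 * (iteratedDeriv 2 d t / 3 + e t) + 5 / 8 * deriv k t - 5 / 16 * (d t * deriv k t ^ 2)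

variable {x t : ℝ} {d e k s F : ℝ → ℝ}

theorem contDiffAt_affineNumerator (hd : ContDiffAt ℝ ∞ d x) (he : ContDiffAt ℝ ∞ e x) :
    ContDiffAt ℝ ∞ (affineNumerator d e) x := by
  have hd' : ContDiffAt ℝ ∞ (deriv d) x := hd.derivWithin (by simp)
  have hd'' : ContDiffAt ℝ ∞ (iteratedDeriv 2 d) x := by
    rw [iteratedDeriv_succ, iteratedDeriv_one]
    exact hd'.derivWithin (by simp)
  unfold affineNumerator
  fun_prop

theorem contDiffAt_affineRemainder (hd : ContDiffAt ℝ ∞ d x) (he : ContDiffAt ℝ ∞ e x)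
    (hk : ContDiffAt ℝ ∞ k x) : ContDiffAt ℝ ∞ (affineRemainder d e k) x := by
  have hk' : ContDiffAt ℝ ∞ (deriv k) x := hk.derivWithin (by simp)
  have hd' : ContDiffAt ℝ ∞ (deriv d) x := hd.derivWithin (by simp)
  have hd'' : ContDiffAt ℝ ∞ (iteratedDeriv 2 d) x := by
    rw [iteratedDeriv_succ, iteratedDeriv_one]
    exact hd'.derivWithin (by simp)
  unfold affineRemainder
  fun_prop

theorem sq_mul_affineNumerator_div_nine (hode : SolvesSingularODE (4 / 3) d k t) :
    k t ^ 2 * affineNumerator d e t / 9 = -5 / 16 + d t * affineRemainder d e k t := by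
  have helim : deriv d t * k t = 3 / 4 * (1 - d t * deriv k t) := by
    linear_combination 3 / 4 * hode.eq_one
  simp only [affineNumerator, affineRemainder]
  linear_combination -5 / 9 * (deriv d t * k t + 3 / 4 * (1 - d t * deriv k t)) * helim

theorem hasDerivAt_affineRemainder (hd : ContDiffAt ℝ 3 d x) (he : DifferentiableAt ℝ e x)
    (hk : ContDiffAt ℝ 2 k x) (hx : d x = 0) :
    HasDerivAt (affineRemainder d e k)
      (2 * k x * deriv k x * (iteratedDeriv 2 d x / 3 + e x)
        + k x ^ 2 * (iteratedDeriv 3 d x / 3 + deriv e x)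
        + 5 / 8 * iteratedDeriv 2 k x - 5 / 16 * (deriv d x * deriv k x ^ 2)) x := by
  have hd0 : HasDerivAt d (deriv d x) x := (hd.differentiableAt (by simp)).hasDerivAt
  have hk0 : HasDerivAt k (deriv k x) x := (hk.differentiableAt (by simp)).hasDerivAt
  have hd2 := hasDerivAt_iteratedDeriv_of_contDiffAt (k := 2) hd (by norm_num)
  have hk1 := hasDerivAt_iteratedDeriv_of_contDiffAt (k := 1) hk (by norm_num)
  rw [iteratedDeriv_one] at hk1
  have hsq := (hk0.fun_pow 2).fun_mul ((hd2.div_const 3).fun_add he.hasDerivAt)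
  have hlin := hk1.const_mul (5 / 8)
  have hcub := (hd0.fun_mul (hk1.fun_pow 2)).const_mul (5 / 16)
  refine ((hsq.fun_add hlin).fun_sub hcub).congr_deriv ?_
  rw [hx]
  push_cast
  ring

theorem sq_mul_affineNumerator_jet (hd : ContDiffAt ℝ ∞ d x) (he : ContDiffAt ℝ ∞ e x)
    (hk : ContDiffAt ℝ ∞ k x) (hode : ∀ᶠ t in 𝓝 x, SolvesSingularODE (4 / 3) d k t)
    (hx : d x = 0) (hx' : deriv d x ≠ 0)
    (hF : F =ᶠ[𝓝 x] fun t => k t ^ 2 * affineNumerator d e t / 9) :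
    deriv F x = 9 * (7 * e x - iteratedDeriv 2 d x) / (112 * deriv d x) ∧
    iteratedDeriv 2 F x = 9 * deriv e x / (8 * deriv d x)
      - 27 * iteratedDeriv 2 d x * (iteratedDeriv 2 d x + 21 * e x) / (784 * deriv d x ^ 2) := by
  have hR := contDiffAt_affineRemainder hd he hk
  have hFR : F =ᶠ[𝓝 x] fun t => -5 / 16 + d t * affineRemainder d e k t :=
    hF.trans (hode.mono fun t ht => sq_mul_affineNumerator_div_nine ht)
  have hd3 : ContDiffAt ℝ 3 d x := contDiffAt_infty.mp hd 3
  have hk3 : ContDiffAt ℝ 3 k x := contDiffAt_infty.mp hk 3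
  have hd2 : ContDiffAt ℝ 2 d x := hd3.of_le (by norm_num)
  have hk2 : ContDiffAt ℝ 2 k x := hk3.of_le (by norm_num)
  have hode₀ := hode.self_of_nhds.eq_one
  have hode₁ := SolvesSingularODE.deriv_lhs_eq_zero hd2 hk2 hode
  have hode₂ := SolvesSingularODE.iteratedDeriv_two_lhs_eq_zero hd3 hk3 hode
  rw [hx, zero_mul, zero_add] at hode₀ hode₁ hode₂
  have hk₀ : k x = 3 / (4 * deriv d x) := by
    field_simp
    linear_combination 3 * hode₀
  have hk₁ : deriv k x = -3 * iteratedDeriv 2 d x / (7 * deriv d x ^ 2) := by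
    rw [hk₀] at hode₁
    field_simp at hode₁ ⊢
    linear_combination hode₁
  have hk₂ : iteratedDeriv 2 k x = 33 * iteratedDeriv 2 d x ^ 2 / (70 * deriv d x ^ 3)
      - 3 * iteratedDeriv 3 d x / (10 * deriv d x ^ 2) := by
    rw [hk₀, hk₁] at hode₂
    field_simp at hode₂ ⊢
    linear_combination 10 * hode₂
  rw [hFR.deriv_eq, hFR.iteratedDeriv_eq 2,
    deriv_const_add_mul_of_eq_zero _ (hd.differentiableAt (by simp))
      (hR.differentiableAt (by simp)) hx,
    iteratedDeriv_two_const_add_mul_of_eq_zero _ hd2 (contDiffAt_infty.mp hR 2) hx,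
    (hasDerivAt_affineRemainder hd3 (he.differentiableAt (by simp)) hk2 hx).deriv,
    affineRemainder, hx, hk₀, hk₁, hk₂]
  constructor <;> field_simp <;> ring

theorem normalizedPrimitive_jet (hd : ContDiffAt ℝ ∞ d x) (he : ContDiffAt ℝ ∞ e x)
    (hF : ContDiffAt ℝ ∞ F x) (hs : ∀ᶠ t in 𝓝[≠] x, HasDerivAt s (|d t| ^ (1 / 3 : ℝ)) t)
    (hx : d x = 0) (hx' : deriv d x ≠ 0)
    (hFs : F =ᶠ[𝓝[≠] x] fun t =>
      normalizedPrimitive (1 / 3) d s t ^ 2 * affineNumerator d e t / 9) :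
    deriv F x = 9 * (7 * e x - iteratedDeriv 2 d x) / (112 * deriv d x) ∧
    iteratedDeriv 2 F x = 9 * deriv e x / (8 * deriv d x)
      - 27 * iteratedDeriv 2 d x * (iteratedDeriv 2 d x + 21 * e x) / (784 * deriv d x ^ 2) := by
  have hN := contDiffAt_affineNumerator hd he
  have hNx : affineNumerator d e x ≠ 0 := by simp [affineNumerator, hx, hx']
  have hG : ContDiffAt ℝ ∞ (fun t => 9 * F t / affineNumerator d e t) x :=
    (contDiffAt_const.mul hF).div hN hNx
  have hGh : (fun t => 9 * F t / affineNumerator d e t) =ᶠ[𝓝[≠] x]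
      fun t => normalizedPrimitive (1 / 3) d s t ^ 2 := by
    filter_upwards [hFs, (hN.continuousAt.eventually_ne hNx).filter_mono nhdsWithin_le_nhds]
      with t hFt hNt
    rw [hFt]
    field_simp
  have hode : ∀ᶠ t in 𝓝[≠] x, SolvesSingularODE (4 / 3) d (normalizedPrimitive (1 / 3) d s) t := by
    have hd_diff : ∀ᶠ t in 𝓝 x, ContDiffAt ℝ 1 d t :=
      (hd.of_le (m := 1) (by simp)).eventually (by simp)
    have hd_ne : ∀ᶠ t in 𝓝[≠] x, d t ≠ 0 :=
      (hd.differentiableAt (by simp)).hasDerivAt.eventually_ne hx'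
    filter_upwards [hs, hd_diff.filter_mono nhdsWithin_le_nhds, hd_ne] with t hst hdt hne
    convert solvesSingularODE_normalizedPrimitive (hdt.differentiableAt (by simp)) hst hne using 1
    norm_num
  obtain ⟨k, hk, hkh, hk_ode⟩ := SolvesSingularODE.exists_contDiffAt_extension hd hG hGh hode
  refine sq_mul_affineNumerator_jet hd he hk hk_ode hx hx' ?_
  have hcont : ContinuousAt (fun t => k t ^ 2 * affineNumerator d e t / 9) x :=
    ((hk.continuousAt.pow 2).mul hN.continuousAt).div_const 9
  rw [← hF.continuousAt.eventuallyEq_nhds_iff_eventuallyEq_nhdsNE hcont]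
  filter_upwards [hFs, hkh] with t hFt hkt
  rw [hFt, hkt]

end AffineCurvatureJet

section Bracket

theorem det2_self (a : ℝ × ℝ) : det2 a a = 0 := by
  simp only [det2]
  ring

/-- The Plücker relation `[a, b][c, d] - [a, c][b, d] + [a, d][b, c] = 0` for parallel `a`, `b`. -/
theorem det2_mul_det2_eq_of_det2_eq_zero {a b : ℝ × ℝ} (hab : det2 a b = 0) (c d : ℝ × ℝ) :
    det2 a c * det2 b d = det2 a d * det2 b c := by
  simp only [det2] at hab ⊢
  linear_combination (c.1 * d.2 - c.2 * d.1) * hab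

theorem hasDerivAt_det2 {u v : ℝ → ℝ × ℝ} {u' v' : ℝ × ℝ} {t : ℝ} (hu : HasDerivAt u u' t)
    (hv : HasDerivAt v v' t) :
    HasDerivAt (fun x => det2 (u x) (v x)) (det2 u' (v t) + det2 (u t) v') t := by
  have hu₁ : HasDerivAt (fun x => (u x).1) u'.1 t := hu.fst
  have hu₂ : HasDerivAt (fun x => (u x).2) u'.2 t := hu.snd
  have hv₁ : HasDerivAt (fun x => (v x).1) v'.1 t := hv.fst
  have hv₂ : HasDerivAt (fun x => (v x).2) v'.2 t := hv.snd
  refine ((hu₁.mul hv₂).sub (hu₂.mul hv₁)).congr_deriv ?_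
  simp only [det2]
  ring

/-- The bracket `[γ⁽ᵐ⁾, γ⁽ⁿ⁾]` of derivatives of a plane curve, as a function of the parameter. -/
def derivBracket (γ : ℝ → ℝ × ℝ) (m n : ℕ) (t : ℝ) : ℝ :=
  det2 (iteratedDeriv m γ t) (iteratedDeriv n γ t)

variable {γ : ℝ → ℝ × ℝ}

theorem contDiff_derivBracket (hγ : ContDiff ℝ ∞ γ) (m n : ℕ) :
    ContDiff ℝ ∞ (derivBracket γ m n) := by
  have hγ_iter (k : ℕ) : ContDiff ℝ ∞ (iteratedDeriv k γ) := by
    rw [iteratedDeriv_eq_iterate]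
    exact hγ.iterate_deriv k
  exact ((hγ_iter m).fst.mul (hγ_iter n).snd).sub ((hγ_iter m).snd.mul (hγ_iter n).fst)

theorem deriv_derivBracket (hγ : ContDiff ℝ ∞ γ) (m n : ℕ) :
    deriv (derivBracket γ m n) = derivBracket γ (m + 1) n + derivBracket γ m (n + 1) := by
  have hγ_iter (k : ℕ) (t : ℝ) : HasDerivAt (iteratedDeriv k γ) (iteratedDeriv (k + 1) γ t) t :=
    hasDerivAt_iteratedDeriv_of_contDiffAt hγ.contDiffAt (by exact_mod_cast ENat.natCast_lt_top k)
  funext t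
  exact (hasDerivAt_det2 (hγ_iter m t) (hγ_iter n t)).deriv

theorem derivBracket_self (m : ℕ) : derivBracket γ m m = 0 :=
  funext fun _ => det2_self _

theorem deriv_derivBracket_succ (hγ : ContDiff ℝ ∞ γ) (m : ℕ) :
    deriv (derivBracket γ m (m + 1)) = derivBracket γ m (m + 2) := by
  rw [deriv_derivBracket hγ, derivBracket_self, zero_add]

theorem iteratedDeriv_two_derivBracket_succ (hγ : ContDiff ℝ ∞ γ) (m : ℕ) :
    iteratedDeriv 2 (derivBracket γ m (m + 1))
      = derivBracket γ (m + 1) (m + 2) + derivBracket γ m (m + 3) := by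
  rw [iteratedDeriv_succ, iteratedDeriv_one, deriv_derivBracket_succ hγ, deriv_derivBracket hγ]

theorem hasDerivAt_sA (hγ : ContDiff ℝ ∞ γ) (t : ℝ) :
    HasDerivAt (sA γ) (|derivBracket γ 1 2 t| ^ (1 / 3 : ℝ)) t := by
  have hcont : Continuous fun u => |derivBracket γ 1 2 u| ^ (1 / 3 : ℝ) :=
    (contDiff_derivBracket hγ 1 2).continuous.abs.rpow_const fun _ => Or.inr (by norm_num)
  simp only [derivBracket, iteratedDeriv_one] at hcont ⊢
  exact (hcont.integral_hasStrictDerivAt 0 t).hasDerivAt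

theorem kappaA_eq_affineNumerator_div (hγ : ContDiff ℝ ∞ γ) (t : ℝ) :
    kappaA γ t = affineNumerator (derivBracket γ 1 2) (derivBracket γ 2 3) t
      / (9 * |derivBracket γ 1 2 t| ^ (8 / 3 : ℝ)) := by
  rw [affineNumerator, iteratedDeriv_two_derivBracket_succ hγ, deriv_derivBracket_succ hγ]
  simp only [kappaA, derivBracket, Pi.add_apply, iteratedDeriv_one]
  congr 1
  ring

theorem sA_sq_mul_kappaA (hγ : ContDiff ℝ ∞ γ) (t : ℝ) :
    sA γ t ^ 2 * kappaA γ t = normalizedPrimitive (1 / 3) (derivBracket γ 1 2) (sA γ) t ^ 2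
      * affineNumerator (derivBracket γ 1 2) (derivBracket γ 2 3) t / 9 := by
  have hpow : |derivBracket γ 1 2 t| ^ (8 / 3 : ℝ)
      = (derivBracket γ 1 2 t * |derivBracket γ 1 2 t| ^ (1 / 3 : ℝ)) ^ 2 := by
    rw [mul_pow, ← sq_abs (derivBracket γ 1 2 t), ← Real.rpow_natCast, ← Real.rpow_natCast,
      ← Real.rpow_mul (abs_nonneg _),
      ← Real.rpow_add_of_nonneg (abs_nonneg _) (by norm_num) (by norm_num)]
    norm_num
  rw [kappaA_eq_affineNumerator_div hγ, hpow, normalizedPrimitive, div_pow]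
  ring

theorem sA_sq_mul_kappaA_jet (hγ : ContDiff ℝ ∞ γ) (hinf : HasGenericInflection γ) {F : ℝ → ℝ}
    (hF : ContDiffAt ℝ ∞ F 0) (hFeq : F =ᶠ[𝓝[≠] 0] fun t => sA γ t ^ 2 * kappaA γ t) :
    deriv F 0
      = 9 * (6 * derivBracket γ 2 3 0 - derivBracket γ 1 4 0) / (112 * derivBracket γ 1 3 0) ∧
    iteratedDeriv 2 F 0
      = 9 * (6 * derivBracket γ 2 3 0 - derivBracket γ 1 4 0)
          * (3 * derivBracket γ 1 4 0 - 11 * derivBracket γ 2 3 0)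
        / (784 * derivBracket γ 1 3 0 ^ 2) := by
  obtain ⟨-, hd, ha⟩ := hinf
  rw [← iteratedDeriv_one] at hd ha
  have hd₁ := deriv_derivBracket_succ hγ 1
  have hne : derivBracket γ 1 3 0 ≠ 0 := ha
  have he₁ : deriv (derivBracket γ 2 3) 0
      = derivBracket γ 1 4 0 * derivBracket γ 2 3 0 / derivBracket γ 1 3 0 := by
    rw [deriv_derivBracket_succ hγ, eq_div_iff hne, mul_comm]
    exact det2_mul_det2_eq_of_det2_eq_zero hd _ _
  have hjet := normalizedPrimitive_jet (contDiff_derivBracket hγ 1 2).contDiffAt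
    (contDiff_derivBracket hγ 2 3).contDiffAt hF (Eventually.of_forall (hasDerivAt_sA hγ)) hd
    (by rwa [hd₁]) (by simpa only [sA_sq_mul_kappaA hγ] using hFeq)
  rw [he₁, hd₁, iteratedDeriv_two_derivBracket_succ hγ, Pi.add_apply] at hjet
  rw [hjet.1, hjet.2]
  constructor <;> field_simp <;> ring

end Bracket

/-- At a generic inflection point, the `C^∞` extension `F` of `(s_A)²·κ_A` (in the
original parameter `t`) satisfies
`−(9/7)·(([γ'(0),γ⁗(0)] + [γ''(0),γ'''(0)])/[γ'(0),γ'''(0)])·F'(0) + 32·F'(0)² + 9·F''(0) = 0`. -/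
theorem stmt_16 (γ : ℝ → ℝ × ℝ) (hγ : ContDiff ℝ (⊤:ℕ∞) γ)
    (hinf : HasGenericInflection γ)
    (hreg : ∀ᶠ t in 𝓝[≠] (0:ℝ), det2 (deriv γ t) (iteratedDeriv 2 γ t) ≠ 0)
    (F : ℝ → ℝ) (ε : ℝ) (hε : 0 < ε)
    (hF : ContDiffOn ℝ (⊤:ℕ∞) F (Set.Ioo (-ε) ε))
    (hFeq : ∀ t ∈ Set.Ioo (-ε) ε, t ≠ 0 → F t = sA γ t ^ 2 * kappaA γ t) :
    -(9/7) * ((det2 (deriv γ 0) (iteratedDeriv 4 γ 0)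
          + det2 (iteratedDeriv 2 γ 0) (iteratedDeriv 3 γ 0))
        / det2 (deriv γ 0) (iteratedDeriv 3 γ 0)) * deriv F 0
      + 32 * deriv F 0 ^ 2 + 9 * iteratedDeriv 2 F 0 = 0 := by
  have hIoo : Ioo (-ε) ε ∈ 𝓝 (0 : ℝ) := Ioo_mem_nhds (neg_neg_of_pos hε) hε
  have hF_eq : F =ᶠ[𝓝[≠] 0] fun t => sA γ t ^ 2 * kappaA γ t := by
    filter_upwards [self_mem_nhdsWithin, nhdsWithin_le_nhds hIoo] with t ht htε
    exact hFeq t htε ht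
  obtain ⟨hF₁, hF₂⟩ := sA_sq_mul_kappaA_jet hγ hinf (hF.contDiffAt hIoo) hF_eq
  have ha := hinf.2.2
  simp only [derivBracket, iteratedDeriv_one] at hF₁ hF₂
  rw [hF₁, hF₂]
  field_simp
  ring
end
end

section
/- Let f : ℝ → ℝ be a C^∞ function with f(0) = −5/16 and 32·f'(0)² + 9·f''(0) = 0. Then there exists a C^∞ regular curve γ : (−δ, δ) → ℝ² (for some δ > 0) with a generic inflection point at τ = 0 such that τ is the 3/4-arclength parameter of γ (i.e. s_A(τ) = sgn(τ)·|τ|^{4/3} for all τ, equivalently [γ'(τ), γ''(τ)] = 64τ/27) and s_A(τ)²·κ_A(τ) = f(τ) for all τ ≠ 0 near 0. -/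
noncomputable section
open Real Set Filter Topology

/-!
Along a curve with a unimodular frame `γ'' = v γ' + D n`, `n' = -v n`, take `D = 64 τ / 27`. Then
`τ` is the 3/4-arclength parameter, and `s_A² κ_A = 9/16 · τ (v - τ (v' + v²)) - 5/16`, so that
prescribing `f` amounts to solving a Riccati equation for `v` which is singular at `τ = 0`.
Substituting `v = a + τ w`, the coefficients of `1`, `τ` and `τ²` force `f 0 = -5/16`,
`a = 16/9 · f' 0` and `32 (f' 0)² + 9 f'' 0 = 0`. The rest of the equation is divisible by `τ³`,
which leaves the regular equation `w' = -2 a w - τ w² - h` with `h` the smooth Taylor remainder.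
-/

section ParametricIntegral

variable {E : Type*} [NormedAddCommGroup E] [NormedSpace ℝ E] {F : ℝ → ℝ → E}

lemma hasDerivAt_fst_of_contDiff_uncurry (hF : ContDiff ℝ 1 (Function.uncurry F)) (x s : ℝ) :
    HasDerivAt (fun y => F y s) (fderiv ℝ (Function.uncurry F) (x, s) (1, 0)) x :=
  (hF.differentiable one_ne_zero (x, s)).hasFDerivAt.comp_hasDerivAt (f := fun y => (y, s)) x
    ((hasDerivAt_id x).prodMk (hasDerivAt_const x s))

lemma hasDerivAt_intervalIntegral_of_contDiff_uncurry
    (hF : ContDiff ℝ 1 (Function.uncurry F)) (a b x : ℝ) :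
    HasDerivAt (fun y => ∫ s in a..b, F y s)
      (∫ s in a..b, fderiv ℝ (Function.uncurry F) (x, s) (1, 0)) x := by
  have hslice (y : ℝ) : Continuous (F y) := hF.continuous.comp (Continuous.prodMk_right y)
  have hpartial : Continuous fun p : ℝ × ℝ => fderiv ℝ (Function.uncurry F) p (1, 0) :=
    (hF.continuous_fderiv one_ne_zero).clm_apply continuous_const
  obtain ⟨C, hC⟩ := ((isCompact_closedBall x 1).prod isCompact_uIcc).exists_bound_of_continuousOn
    (hpartial.continuousOn (s := Metric.closedBall x 1 ×ˢ uIcc a b))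
  refine (intervalIntegral.hasDerivAt_integral_of_dominated_loc_of_deriv_le
    (F' := fun y s => fderiv ℝ (Function.uncurry F) (y, s) (1, 0)) (bound := fun _ => C)
    (Metric.closedBall_mem_nhds x one_pos)
    (Eventually.of_forall fun y => (hslice y).aestronglyMeasurable)
    ((hslice x).intervalIntegrable a b)
    (hpartial.comp (Continuous.prodMk_right x)).aestronglyMeasurable ?_
    intervalIntegrable_const ?_).2
  · exact Eventually.of_forall fun s hs y hy => hC (y, s) ⟨hy, uIoc_subset_uIcc hs⟩
  · exact Eventually.of_forall fun s _ y _ => hasDerivAt_fst_of_contDiff_uncurry hF y s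

lemma contDiff_nat_intervalIntegral {n : ℕ} (hF : ContDiff ℝ n (Function.uncurry F)) (a b : ℝ) :
    ContDiff ℝ n fun x => ∫ s in a..b, F x s := by
  induction n generalizing F with
  | zero =>
    rw [Nat.cast_zero, contDiff_zero] at hF ⊢
    exact intervalIntegral.continuous_parametric_intervalIntegral_of_continuous' hF a b
  | succ n ih =>
    have hderiv := hasDerivAt_intervalIntegral_of_contDiff_uncurry (hF.of_le (by simp)) a b
    rw [Nat.cast_succ, contDiff_succ_iff_deriv]
    refine ⟨fun x => (hderiv x).differentiableAt, by simp, ?_⟩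
    rw [funext fun x => (hderiv x).deriv]
    exact ih ((hF.fderiv_right (m := n) (by simp)).clm_apply contDiff_const)

theorem contDiff_intervalIntegral {n : ℕ∞} (hF : ContDiff ℝ n (Function.uncurry F)) (a b : ℝ) :
    ContDiff ℝ n fun x => ∫ s in a..b, F x s :=
  contDiff_iff_forall_nat_le.2 fun _ hm =>
    contDiff_nat_intervalIntegral (hF.of_le (by exact_mod_cast hm)) a b

end ParametricIntegral

theorem exists_contDiff_taylor_remainder {E : Type*} [NormedAddCommGroup E] [NormedSpace ℝ E]
    [CompleteSpace E] {f : ℝ → E} {m : ℕ∞} {n : ℕ} (hf : ContDiff ℝ (m + (n + 1 : ℕ)) f) (x₀ : ℝ) :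
    ∃ h : ℝ → E, ContDiff ℝ m h ∧ ∀ x, f (x₀ + x) =
      ∑ k ∈ Finset.range (n + 1), (k.factorial : ℝ)⁻¹ • x ^ k • iteratedDeriv k f x₀
        + x ^ (n + 1) • h x := by
  have hderiv : ContDiff ℝ m (iteratedDeriv (n + 1) f) := by
    rw [iteratedDeriv_eq_equiv_comp]
    exact (LinearIsometryEquiv.contDiff _).comp (hf.iteratedFDeriv_right le_rfl)
  refine ⟨fun x => (n.factorial : ℝ)⁻¹ •
    ∫ s in (0 : ℝ)..1, (1 - s) ^ n • iteratedDeriv (n + 1) f (x₀ + s • x),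
    (contDiff_intervalIntegral ?_ 0 1).const_smul _, fun x => ?_⟩
  · exact ContDiff.smul (by fun_prop) (hderiv.comp (by fun_prop))
  · rw [map_add_eq_sum_add_integral_iteratedFDeriv (n := n)
      fun t _ => (hf.of_le (by exact_mod_cast le_add_self)).contDiffAt]
    simp only [iteratedFDeriv_apply_eq_iteratedDeriv_mul_prod, Finset.prod_const,
      Finset.card_univ, Fintype.card_fin, smul_comm _ (x ^ (n + 1)),
      intervalIntegral.integral_smul]

theorem exists_contDiff_eventuallyEq {V E : Type*} [NormedAddCommGroup V]
    [NormedSpace ℝ V] [HasContDiffBump V] [NormedAddCommGroup E] [NormedSpace ℝ E] {n : ℕ∞}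
    {f : V → E} {s : Set V} {x : V} (hf : ContDiffOn ℝ n f s) (hs : s ∈ 𝓝 x) :
    ∃ g : V → E, ContDiff ℝ n g ∧ g =ᶠ[𝓝 x] f := by
  obtain ⟨r, hr, hrs⟩ := Metric.mem_nhds_iff.1 hs
  let χ : ContDiffBump x := ⟨r / 4, r / 2, by positivity, by linarith⟩
  refine ⟨fun y => χ y • f y, contDiff_iff_contDiffAt.2 fun y => ?_, ?_⟩
  · by_cases hy : y ∈ tsupport χ
    · have hy_ball : y ∈ Metric.ball x r := by
        rw [χ.tsupport_eq] at hy
        exact Metric.closedBall_subset_ball (half_lt_self hr) hy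
      exact χ.contDiffAt.smul
        (hf.contDiffAt (mem_of_superset (Metric.isOpen_ball.mem_nhds hy_ball) hrs))
    · refine (contDiffAt_const (c := (0 : E))).congr_of_eventuallyEq ?_
      filter_upwards [notMem_tsupport_iff_eventuallyEq.1 hy] with z hz
      simp only [hz, Pi.zero_apply, zero_smul]
  · filter_upwards [χ.eventuallyEq_one] with y hy
    simp only [hy, Pi.one_apply, one_smul]

section ODE

variable {E : Type*} [NormedAddCommGroup E] [NormedSpace ℝ E] [CompleteSpace E]
  {G : ℝ → E → E} {t₀ : ℝ} {x₀ : E}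

-- The autonomous existence theorem applies to the field `(t, x) ↦ (1, G t x)` on `ℝ × E`.
lemma exists_eventually_hasDerivAt (hG : ContDiffAt ℝ 1 (Function.uncurry G) (t₀, x₀)) :
    ∃ w : ℝ → E, w t₀ = x₀ ∧ ∀ᶠ t in 𝓝 t₀, HasDerivAt w (G t (w t)) t := by
  have hfield : ContDiffAt ℝ 1 (fun z : ℝ × E => ((1 : ℝ), G z.1 z.2)) (t₀, x₀) :=
    contDiffAt_const.prodMk hG
  obtain ⟨z, hz₀, ε, hε, hz⟩ :=
    hfield.exists_forall_mem_closedBall_exists_eq_forall_mem_Ioo_hasDerivAt₀ t₀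
  have ht₀ : t₀ ∈ Ioo (t₀ - ε) (t₀ + ε) := by simpa using hε
  have htime_deriv (t) (ht : t ∈ Ioo (t₀ - ε) (t₀ + ε)) : HasDerivAt (fun t => (z t).1) 1 t :=
    (hz t ht).fst
  have htime : EqOn (fun t => (z t).1) id (Ioo (t₀ - ε) (t₀ + ε)) :=
    isOpen_Ioo.eqOn_of_deriv_eq isPreconnected_Ioo
      (fun t ht => (htime_deriv t ht).differentiableAt.differentiableWithinAt) differentiableOn_id
      (fun t ht => by rw [(htime_deriv t ht).deriv, deriv_id]) ht₀ (congrArg Prod.fst hz₀)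
  refine ⟨fun t => (z t).2, congrArg Prod.snd hz₀, ?_⟩
  filter_upwards [isOpen_Ioo.mem_nhds ht₀] with t ht
  have hspace : HasDerivAt (fun t => (z t).2) (G (z t).1 (z t).2) t := (hz t ht).snd
  rwa [show (z t).1 = t from htime ht] at hspace

theorem exists_contDiff_eventually_hasDerivAt {n : ℕ∞} (hn : 1 ≤ n)
    (hG : ContDiff ℝ n (Function.uncurry G)) (t₀ : ℝ) (x₀ : E) :
    ∃ w : ℝ → E, ContDiff ℝ n w ∧ w t₀ = x₀ ∧ ∀ᶠ t in 𝓝 t₀, HasDerivAt w (G t (w t)) t := by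
  obtain ⟨u, hu₀, hu⟩ := exists_eventually_hasDerivAt (t₀ := t₀) (x₀ := x₀)
    (hG.of_le (by exact_mod_cast hn)).contDiffAt
  obtain ⟨ε, hε, huε⟩ := Metric.nhds_basis_closedBall.eventually_iff.1 hu
  rw [Real.closedBall_eq_Icc] at huε
  have hreg : ContDiffOn ℝ n u (Icc (t₀ - ε) (t₀ + ε)) :=
    ODE.contDiffOn_enat_Icc_of_hasDerivWithinAt hG.contDiffOn
      (fun t ht => (huε ht).hasDerivWithinAt) (mapsTo_univ _ _)
  obtain ⟨w, hw, hwu⟩ := exists_contDiff_eventuallyEq hreg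
    (Icc_mem_nhds (sub_lt_self t₀ hε) (lt_add_of_pos_right t₀ hε))
  refine ⟨w, hw, hwu.eq_of_nhds.trans hu₀, ?_⟩
  filter_upwards [hwu.eventuallyEq_nhds, hu] with t hwt hut
  rw [hwt.eq_of_nhds]
  exact hut.congr_of_eventuallyEq hwt

end ODE

theorem exists_contDiff_eventually_singular_riccati {g : ℝ → ℝ} (hg : ContDiff ℝ (⊤ : ℕ∞) g)
    (hg₀ : g 0 = 0) (hg₂ : iteratedDeriv 2 g 0 = -2 * deriv g 0 ^ 2) :
    ∃ v : ℝ → ℝ, ContDiff ℝ (⊤ : ℕ∞) v ∧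
      ∀ᶠ t in 𝓝 0, t * (v t - t * (deriv v t + v t ^ 2)) = g t := by
  set a := deriv g 0 with ha
  obtain ⟨h, hh, hgh⟩ := exists_contDiff_taylor_remainder (m := ⊤) (n := 2) hg 0
  obtain ⟨w, hw, -, hwG⟩ := exists_contDiff_eventually_hasDerivAt (n := ⊤) le_top
    (G := fun t x => -2 * a * x - t * x ^ 2 - h t)
    (by simp only [Function.uncurry_def]; fun_prop) 0 0
  refine ⟨fun t => a + t * w t, by fun_prop, ?_⟩
  filter_upwards [hwG] with t hwt
  have hderiv : deriv (fun t => a + t * w t) t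
      = w t + t * (-2 * a * w t - t * w t ^ 2 - h t) := by
    simpa using (((hasDerivAt_id t).mul hwt).const_add a).deriv
  have htaylor : g t = a * t - a ^ 2 * t ^ 2 + t ^ 3 * h t := by
    have := hgh t
    simp only [zero_add, Finset.sum_range_succ, Finset.sum_range_zero, iteratedDeriv_zero,
      iteratedDeriv_one, hg₀, hg₂, ← ha, smul_eq_mul, Nat.factorial] at this
    rw [this]
    push_cast
    ring
  rw [hderiv, htaylor]
  ring

section Det2

variable (p q : ℝ × ℝ) (a b c d : ℝ)

lemma det2_smul_add_smul_right : det2 p (c • p + d • q) = d * det2 p q := by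
  simp only [det2, Prod.fst_add, Prod.snd_add, Prod.smul_fst, Prod.smul_snd, smul_eq_mul]
  ring

lemma det2_smul_add_smul :
    det2 (a • p + b • q) (c • p + d • q) = (a * d - b * c) * det2 p q := by
  simp only [det2, Prod.fst_add, Prod.snd_add, Prod.smul_fst, Prod.smul_snd, smul_eq_mul]
  ring

end Det2

lemma integral_abs_rpow {r : ℝ} (hr : -1 < r) (τ : ℝ) :
    ∫ u in (0 : ℝ)..τ, |u| ^ r = Real.sign τ * |τ| ^ (r + 1) / (r + 1) := by
  have hpos {x : ℝ} (hx : 0 < x) : ∫ u in (0 : ℝ)..x, |u| ^ r = x ^ (r + 1) / (r + 1) := by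
    rw [intervalIntegral.integral_congr (g := fun u => u ^ r) fun u hu => by
      rw [uIcc_of_le hx.le] at hu
      simp only [abs_of_nonneg hu.1], integral_rpow (Or.inl hr),
      zero_rpow (by linarith), sub_zero]
  rcases lt_trichotomy τ 0 with hτ | rfl | hτ
  · have hreflect := intervalIntegral.integral_comp_neg (a := 0) (b := -τ) fun u => |u| ^ r
    simp only [abs_neg, neg_neg, neg_zero, hpos (neg_pos.2 hτ)] at hreflect
    rw [intervalIntegral.integral_symm, ← hreflect, Real.sign_of_neg hτ, abs_of_neg hτ]
    ring
  · simp
  · rw [hpos hτ, Real.sign_of_pos hτ, abs_of_pos hτ, one_mul]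

theorem sA_eq_of_det2_eq_mul {γ : ℝ → ℝ × ℝ} {c : ℝ}
    (hγ : ∀ u, det2 (deriv γ u) (iteratedDeriv 2 γ u) = c * u) (τ : ℝ) :
    sA γ τ = 3 / 4 * |c| ^ ((1 : ℝ) / 3) * (Real.sign τ * |τ| ^ ((4 : ℝ) / 3)) := by
  simp only [sA, hγ, abs_mul, mul_rpow (abs_nonneg _) (abs_nonneg _),
    intervalIntegral.integral_const_mul]
  rw [integral_abs_rpow (by norm_num), show (1 : ℝ) / 3 + 1 = 4 / 3 by norm_num]
  ring

lemma sign_sq_of_ne_zero {x : ℝ} (hx : x ≠ 0) : Real.sign x ^ 2 = 1 := by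
  rcases Real.sign_apply_eq_of_ne_zero x hx with h | h <;> rw [h] <;> norm_num

/-- `(γ', n)` is a unimodular moving frame along the plane curve `γ`, with structure equations
`γ'' = v γ' + D n` and `n' = -v n`. Thus `D = [γ', γ'']`, and the function `v` is free: this is
how curves with prescribed `[γ', γ'']` are parametrized. -/
structure IsUnimodularFrame (v D : ℝ → ℝ) (γ n : ℝ → ℝ × ℝ) : Prop where
  det_eq_one (t : ℝ) : det2 (deriv γ t) (n t) = 1
  hasDerivAt_tangent (t : ℝ) : HasDerivAt (deriv γ) (v t • deriv γ t + D t • n t) t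
  hasDerivAt_normal (t : ℝ) : HasDerivAt n (-v t • n t) t

section Primitive

variable {E : Type*} [NormedAddCommGroup E] [NormedSpace ℝ E] [CompleteSpace E] {φ : ℝ → E}

lemma deriv_primitive (hφ : Continuous φ) :
    deriv (fun x => ∫ t in (0 : ℝ)..x, φ t) = φ :=
  funext fun x => hφ.deriv_integral _ 0 x

theorem contDiff_infty_primitive (hφ : ContDiff ℝ (⊤ : ℕ∞) φ) :
    ContDiff ℝ (⊤ : ℕ∞) fun x => ∫ t in (0 : ℝ)..x, φ t :=
  contDiff_infty_iff_deriv.2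
    ⟨fun x => (hφ.continuous.integral_hasStrictDerivAt 0 x).hasDerivAt.differentiableAt,
      by rwa [deriv_primitive hφ.continuous]⟩

end Primitive

theorem exists_contDiff_isUnimodularFrame {v D : ℝ → ℝ} (hv : ContDiff ℝ (⊤ : ℕ∞) v)
    (hD : ContDiff ℝ (⊤ : ℕ∞) D) :
    ∃ γ n : ℝ → ℝ × ℝ, ContDiff ℝ (⊤ : ℕ∞) γ ∧ IsUnimodularFrame v D γ n := by
  let P : ℝ → ℝ := fun x => ∫ t in (0 : ℝ)..x, v t
  let Q : ℝ → ℝ := fun x => ∫ t in (0 : ℝ)..x, D t * exp (-P t) ^ 2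
  have hP : ContDiff ℝ (⊤ : ℕ∞) P := contDiff_infty_primitive hv
  have hQ : ContDiff ℝ (⊤ : ℕ∞) Q := contDiff_infty_primitive (by fun_prop)
  have hP' (t : ℝ) : HasDerivAt P (v t) t :=
    (hv.continuous.integral_hasStrictDerivAt 0 t).hasDerivAt
  have hQ' (t : ℝ) : HasDerivAt Q (D t * exp (-P t) ^ 2) t :=
    ((hD.continuous.mul (hP.neg.exp.pow 2).continuous).integral_hasStrictDerivAt 0 t).hasDerivAt
  have hexp (t : ℝ) : exp (P t) * exp (-P t) = 1 := by rw [← exp_add, add_neg_cancel, exp_zero]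
  let T : ℝ → ℝ × ℝ := fun t => (exp (P t), exp (P t) * Q t)
  have hT : ContDiff ℝ (⊤ : ℕ∞) T := hP.exp.prodMk (hP.exp.mul hQ)
  refine ⟨fun x => ∫ t in (0 : ℝ)..x, T t, fun t => (0, exp (-P t)), contDiff_infty_primitive hT,
    ?_⟩
  have hγ' : deriv (fun x => ∫ t in (0 : ℝ)..x, T t) = T :=
    deriv_primitive hT.continuous
  refine ⟨fun t => ?_, fun t => ?_, fun t => ?_⟩
  · rw [hγ']
    simpa [det2, T] using hexp t
  · rw [hγ']
    refine ((hP' t).exp.prodMk ((hP' t).exp.mul (hQ' t))).congr_deriv (Prod.ext ?_ ?_)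
    · simp [T, mul_comm]
    · simp only [T, Prod.snd_add, Prod.smul_snd, smul_eq_mul]
      linear_combination D t * exp (-P t) * hexp t
  · exact ((hasDerivAt_const t 0).prodMk (hP' t).neg.exp).congr_deriv (by simp [mul_comm])

namespace IsUnimodularFrame

variable {v D : ℝ → ℝ} {γ n : ℝ → ℝ × ℝ}

section Derivatives

variable (h : IsUnimodularFrame v D γ n)
include h

lemma deriv_ne_zero (t : ℝ) : deriv γ t ≠ 0 := fun h₀ => by
  simpa [det2, h₀] using h.det_eq_one t

lemma hasDerivAt_smul_add_smul {a b : ℝ → ℝ} {a' b' t : ℝ} (ha : HasDerivAt a a' t)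
    (hb : HasDerivAt b b' t) :
    HasDerivAt (fun s => a s • deriv γ s + b s • n s)
      ((a' + a t * v t) • deriv γ t + (a t * D t + b' - b t * v t) • n t) t := by
  refine ((ha.smul (h.hasDerivAt_tangent t)).add
    (hb.smul (h.hasDerivAt_normal t))).congr_deriv ?_
  module

lemma iteratedDeriv_two : iteratedDeriv 2 γ = fun t => v t • deriv γ t + D t • n t := by
  rw [iteratedDeriv_succ, iteratedDeriv_one]
  exact funext fun t => (h.hasDerivAt_tangent t).deriv

lemma iteratedDeriv_three (hv : Differentiable ℝ v) (hD : Differentiable ℝ D) :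
    iteratedDeriv 3 γ = fun t => (deriv v t + v t ^ 2) • deriv γ t + deriv D t • n t := by
  rw [iteratedDeriv_succ, h.iteratedDeriv_two]
  funext t
  rw [(h.hasDerivAt_smul_add_smul (hv t).hasDerivAt (hD t).hasDerivAt).deriv]
  module

lemma iteratedDeriv_four (hv : Differentiable ℝ v) (hv' : Differentiable ℝ (deriv v))
    (hD : Differentiable ℝ D) (hD' : Differentiable ℝ (deriv D)) :
    iteratedDeriv 4 γ = fun t =>
      (deriv (deriv v) t + 3 * v t * deriv v t + v t ^ 3) • deriv γ t +
        ((deriv v t + v t ^ 2) * D t + deriv (deriv D) t - deriv D t * v t) • n t := by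
  rw [iteratedDeriv_succ, h.iteratedDeriv_three hv hD]
  funext t
  have hcoeff : HasDerivAt (fun t => deriv v t + v t ^ 2)
      (deriv (deriv v) t + 2 * v t * deriv v t) t :=
    ((hv' t).hasDerivAt.add ((hv t).hasDerivAt.pow 2)).congr_deriv (by simp)
  rw [(h.hasDerivAt_smul_add_smul hcoeff (hD' t).hasDerivAt).deriv]
  module

lemma det2_deriv_iteratedDeriv_two (t : ℝ) :
    det2 (deriv γ t) (iteratedDeriv 2 γ t) = D t := by
  rw [h.iteratedDeriv_two, det2_smul_add_smul_right, h.det_eq_one, mul_one]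

lemma det2_deriv_iteratedDeriv_three (hv : Differentiable ℝ v) (hD : Differentiable ℝ D) (t : ℝ) :
    det2 (deriv γ t) (iteratedDeriv 3 γ t) = deriv D t := by
  rw [h.iteratedDeriv_three hv hD, det2_smul_add_smul_right, h.det_eq_one, mul_one]

lemma hasGenericInflection (hv : Differentiable ℝ v) (hD : Differentiable ℝ D) (hD₀ : D 0 = 0)
    (hD₀' : deriv D 0 ≠ 0) : HasGenericInflection γ :=
  ⟨h.deriv_ne_zero 0, (h.det2_deriv_iteratedDeriv_two 0).trans hD₀,
    by rwa [h.det2_deriv_iteratedDeriv_three hv hD]⟩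

theorem kappaA_eq (hv : Differentiable ℝ v) (hv' : Differentiable ℝ (deriv v))
    (hD : Differentiable ℝ D) (hD' : Differentiable ℝ (deriv D)) (t : ℝ) :
    kappaA γ t =
      (9 * D t * (v t * deriv D t - D t * (deriv v t + v t ^ 2)) + 3 * D t * deriv (deriv D) t
        - 5 * deriv D t ^ 2) / (9 * |D t| ^ ((8 : ℝ) / 3)) := by
  rw [kappaA, h.det2_deriv_iteratedDeriv_two, h.det2_deriv_iteratedDeriv_three hv hD,
    h.iteratedDeriv_two, h.iteratedDeriv_three hv hD, h.iteratedDeriv_four hv hv' hD hD',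
    det2_smul_add_smul_right, det2_smul_add_smul, h.det_eq_one]
  ring

end Derivatives

theorem sA_sq_mul_kappaA_of_linear {c : ℝ} (h : IsUnimodularFrame v (fun t => c * t) γ n)
    (hv : Differentiable ℝ v) (hv' : Differentiable ℝ (deriv v)) (hc : c ≠ 0) {τ : ℝ}
    (hτ : τ ≠ 0) :
    sA γ τ ^ 2 * kappaA γ τ = 9 / 16 * (τ * (v τ - τ * (deriv v τ + v τ ^ 2))) - 5 / 16 := by
  have hderiv : deriv (fun t => c * t) = fun _ => c := funext fun t => by simp
  have hsA : sA γ τ ^ 2 = 9 / 16 * (|c| ^ ((2 : ℝ) / 3) * |τ| ^ ((8 : ℝ) / 3)) := by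
    rw [sA_eq_of_det2_eq_mul h.det2_deriv_iteratedDeriv_two]
    simp only [mul_pow, ← rpow_mul_natCast (abs_nonneg _), sign_sq_of_ne_zero hτ]
    norm_num
    ring
  have hden : |c * τ| ^ ((8 : ℝ) / 3) = c ^ 2 * (|c| ^ ((2 : ℝ) / 3) * |τ| ^ ((8 : ℝ) / 3)) := by
    rw [abs_mul, mul_rpow (abs_nonneg c) (abs_nonneg τ), ← sq_abs c, ← mul_assoc,
      ← rpow_natCast, ← rpow_add (abs_pos.2 hc)]
    norm_num
  rw [h.kappaA_eq hv hv' (by fun_prop) (by rw [hderiv]; fun_prop), hsA, hden, hderiv, deriv_const]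
  field_simp
  ring

end IsUnimodularFrame

theorem exists_contDiff_hasGenericInflection_sA_eq {v : ℝ → ℝ} (hv : ContDiff ℝ (⊤ : ℕ∞) v) :
    ∃ γ : ℝ → ℝ × ℝ, ContDiff ℝ (⊤ : ℕ∞) γ ∧ HasGenericInflection γ ∧
      (∀ τ, sA γ τ = Real.sign τ * |τ| ^ ((4 : ℝ) / 3)) ∧
      (∀ τ, det2 (deriv γ τ) (iteratedDeriv 2 γ τ) = 64 * τ / 27) ∧
      ∀ τ ≠ 0, sA γ τ ^ 2 * kappaA γ τ =
        9 / 16 * (τ * (v τ - τ * (deriv v τ + v τ ^ 2))) - 5 / 16 := by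
  obtain ⟨γ, n, hγ, hframe⟩ := exists_contDiff_isUnimodularFrame hv
    (D := fun t => 64 / 27 * t) (by fun_prop)
  have hv₁ : Differentiable ℝ v := hv.differentiable (by simp)
  have hv₂ : Differentiable ℝ (deriv v) :=
    (contDiff_infty_iff_deriv.1 hv).2.differentiable (by simp)
  have hscale : (3 : ℝ) / 4 * |64 / 27| ^ ((1 : ℝ) / 3) = 1 := by
    rw [show |(64 : ℝ) / 27| = (4 / 3) ^ (3 : ℝ) by norm_num, ← rpow_mul (by norm_num)]
    norm_num
  refine ⟨γ, hγ, hframe.hasGenericInflection hv₁ (by fun_prop) (by simp) (by simp),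
    fun τ => ?_, fun τ => ?_, fun τ hτ => ?_⟩
  · rw [sA_eq_of_det2_eq_mul hframe.det2_deriv_iteratedDeriv_two, hscale, one_mul]
  · rw [hframe.det2_deriv_iteratedDeriv_two]
    ring
  · exact hframe.sA_sq_mul_kappaA_of_linear hv₁ hv₂ (by norm_num) hτ

/-- Realization: for any smooth `f` with `f(0) = −5/16` and `32·f'(0)² + 9·f''(0) = 0`,
there is a regular curve with a generic inflection point at `0`, parametrized by its
3/4-arclength parameter, whose normalized affine curvature function is `f`. -/
theorem stmt_18 (f : ℝ → ℝ) (hf : ContDiff ℝ (⊤:ℕ∞) f)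
    (hf0 : f 0 = -(5/16))
    (hrel : 32 * deriv f 0 ^ 2 + 9 * iteratedDeriv 2 f 0 = 0) :
    ∃ δ > (0:ℝ), ∃ γ : ℝ → ℝ × ℝ,
      ContDiffOn ℝ (⊤:ℕ∞) γ (Set.Ioo (-δ) δ) ∧ HasGenericInflection γ ∧
      (∀ τ ∈ Set.Ioo (-δ) δ, sA γ τ = Real.sign τ * |τ| ^ ((4:ℝ)/3)) ∧
      (∀ τ ∈ Set.Ioo (-δ) δ, det2 (deriv γ τ) (iteratedDeriv 2 γ τ) = 64 * τ / 27) ∧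
      (∀ τ ∈ Set.Ioo (-δ) δ, τ ≠ 0 → sA γ τ ^ 2 * kappaA γ τ = f τ) := by
  set g : ℝ → ℝ := fun t => 16 / 9 * (f t + 5 / 16) with hg
  have hg₀ : g 0 = 0 := by simp [hg, hf0]
  have hg₁ : deriv g = fun t => 16 / 9 * deriv f t := by simp [hg]
  have hg₂ : iteratedDeriv 2 g 0 = -2 * deriv g 0 ^ 2 := by
    have : iteratedDeriv 2 g 0 = 16 / 9 * iteratedDeriv 2 f 0 := by simp [iteratedDeriv_succ', hg₁]
    rw [this, hg₁]
    linear_combination 16 / 81 * hrel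
  obtain ⟨v, hv, hvg⟩ := exists_contDiff_eventually_singular_riccati (by fun_prop) hg₀ hg₂
  obtain ⟨δ, hδ, hvδ⟩ := (nhds_basis_zero_abs_lt ℝ).eventually_iff.1 hvg
  obtain ⟨γ, hγ, hinfl, hsA, hdet, hκ⟩ := exists_contDiff_hasGenericInflection_sA_eq hv
  refine ⟨δ, hδ, γ, hγ.contDiffOn, hinfl, fun τ _ => hsA τ, fun τ _ => hdet τ, fun τ hτ hτ₀ => ?_⟩
  rw [hκ τ hτ₀, hvδ (abs_lt.2 hτ)]
  ring
end
end
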